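/- arXiv:1710.02329 — 9 statements merged into one kernel-verified Lean document; each statement's English description precedes it below -/
import Mathlib

section
/- Let A = (L, R, Σ, T) be a complete deterministic register automaton over an infinite data domain D that admits a synchronizing data word. Then there exists a data word w over Σ × D with |data(w)| ≤ |R| such that post(L × D^R, w) ⊆ L × data(w)^R, i.e., after reading w from any configuration, every reached configuration has all of its register values in data(w). -/
open scoped Classical

/-- Register constraints over a set `R` of registers: built from the atom `true` and
atoms `= r` for `r ∈ R` using conjunction and negation. -/
inductive RC (R : Type) : Type
  | tt : RC R
  | req : R → RC R
  | conj : RC R → RC R → RC R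
  | neg : RC R → RC R

/-- Satisfaction of a register constraint by a register valuation `ν` and a datum `d`. -/
def RC.sat {R D : Type} (ν : R → D) (d : D) : RC R → Prop
  | RC.tt => True
  | RC.req r => ν r = d
  | RC.conj φ ψ => RC.sat ν d φ ∧ RC.sat ν d ψ
  | RC.neg φ => ¬ RC.sat ν d φ

/-- A configuration: a location together with a register valuation. -/
abbrev Config (L R D : Type) : Type := L × (R → D)

/-- A transition: source location, letter, guard, update set, target location. -/
abbrev RATrans (L A R : Type) : Type := L × A × RC R × Set R × L

/-- The update `ν[up := d]` of a register valuation. -/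
noncomputable def updVal {R D : Type} (ν : R → D) (up : Set R) (d : D) : R → D :=
  fun r => if r ∈ up then d else ν r

/-- One-step successor relation of the register automaton with transition relation `T`:
`Step T q (a, d) q'` holds iff `q' ∈ post(q, (a, d))`. -/
def Step {L A R D : Type} (T : Set (RATrans L A R)) (q : Config L R D) (i : A × D)
    (q' : Config L R D) : Prop :=
  ∃ (φ : RC R) (up : Set R) (ℓ' : L),
    (q.1, i.1, φ, up, ℓ') ∈ T ∧ RC.sat q.2 i.2 φ ∧ q' = (ℓ', updVal q.2 up i.2)

/-- `post` of a set of configurations on a single input. -/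
def postStep {L A R D : Type} (T : Set (RATrans L A R)) (S : Set (Config L R D)) (i : A × D) :
    Set (Config L R D) :=
  {q' | ∃ q ∈ S, Step T q i q'}

/-- `post` of a set of configurations on a data word. -/
def postWord {L A R D : Type} (T : Set (RATrans L A R)) (S : Set (Config L R D)) :
    List (A × D) → Set (Config L R D)
  | [] => S
  | i :: w => postWord T (postStep T S i) w

/-- Completeness: every configuration has at least one successor on every input. -/
def RAComplete (D : Type) {L A R : Type} (T : Set (RATrans L A R)) : Prop :=
  ∀ (q : Config L R D) (i : A × D), ∃ q', Step T q i q'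

/-- Determinism: every configuration has at most one successor on every input. -/
def RADet (D : Type) {L A R : Type} (T : Set (RATrans L A R)) : Prop :=
  ∀ (q : Config L R D) (i : A × D) (q₁ q₂ : Config L R D),
    Step T q i q₁ → Step T q i q₂ → q₁ = q₂

/-- The set of data values occurring in a data word. -/
def dataSet {A D : Type} (w : List (A × D)) : Set D := {d | ∃ p ∈ w, p.2 = d}

/-- A synchronizing data word: a nonempty data word sending the set of all
configurations to a single configuration. -/
def IsSync (D : Type) {L A R : Type} (T : Set (RATrans L A R)) (w : List (A × D)) : Prop :=
  w ≠ [] ∧ ∃ q : Config L R D, postWord T (Set.univ : Set (Config L R D)) w = {q}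

def Run {L A R D : Type} (T : Set (RATrans L A R)) :
    List (A × D) → Config L R D → Config L R D → Prop
  | [], q, q' => q = q'
  | i :: w, q, q' => ∃ p, Step T q i p ∧ Run T w p q'

theorem mem_postWord {L A R D : Type} (T : Set (RATrans L A R)) (w : List (A × D)) :
    ∀ (S : Set (Config L R D)) (q' : Config L R D),
      q' ∈ postWord T S w ↔ ∃ q ∈ S, Run T w q q' := by
  induction w with
  | nil => intro S q'; simp [postWord, Run]
  | cons i w ih =>
    intro S q'
    simp only [postWord, ih, Run, postStep, Set.mem_setOf_eq]
    constructor
    · rintro ⟨p, ⟨q, hq, hs⟩, hr⟩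
      exact ⟨q, hq, p, hs, hr⟩
    · rintro ⟨q, hq, p, hs, hr⟩
      exact ⟨p, ⟨q, hq, hs⟩, hr⟩

theorem run_append {L A R D : Type} (T : Set (RATrans L A R)) (u v : List (A × D)) :
    ∀ (q q' : Config L R D), Run T (u ++ v) q q' ↔ ∃ p, Run T u q p ∧ Run T v p q' := by
  induction u with
  | nil => intro q q'; simp [Run]
  | cons i u ih =>
    intro q q'
    simp only [List.cons_append, Run, ih]
    constructor
    · rintro ⟨p, hs, r, h1, h2⟩
      exact ⟨r, ⟨p, hs, h1⟩, h2⟩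
    · rintro ⟨r, ⟨p, hs, h1⟩, h2⟩
      exact ⟨p, hs, r, h1, h2⟩

theorem run_exists {L A R D : Type} {T : Set (RATrans L A R)} (hc : RAComplete D T)
    (w : List (A × D)) : ∀ q : Config L R D, ∃ q', Run T w q q' := by
  induction w with
  | nil => intro q; exact ⟨q, rfl⟩
  | cons i w ih =>
    intro q
    obtain ⟨p, hp⟩ := hc q i
    obtain ⟨q', h⟩ := ih p
    exact ⟨q', p, hp, h⟩

theorem run_det {L A R D : Type} {T : Set (RATrans L A R)} (hd : RADet D T)
    (w : List (A × D)) : ∀ q q₁ q₂ : Config L R D, Run T w q q₁ → Run T w q q₂ → q₁ = q₂ := by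
  induction w with
  | nil => rintro q q₁ q₂ h1 h2; exact h1.symm.trans h2
  | cons i w ih =>
    rintro q q₁ q₂ ⟨p, hp, h1⟩ ⟨p', hp', h2⟩
    obtain rfl := hd _ _ _ _ hp hp'
    exact ih _ _ _ h1 h2

/-- values after a run are old ones or from the word -/
theorem run_vals {L A R D : Type} {T : Set (RATrans L A R)} (P : D → Prop)
    (w : List (A × D)) : ∀ q q' : Config L R D, Run T w q q' → (∀ i ∈ w, P i.2) →
      (∀ r, P (q.2 r)) → ∀ r, P (q'.2 r) := by
  induction w with
  | nil => rintro q q' rfl _ h; exact h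
  | cons i w ih =>
    rintro q q' ⟨p, ⟨φ, up, l, _, _, rfl⟩, hr⟩ hw h
    refine ih _ _ hr (fun j hj => hw j (List.mem_cons_of_mem _ hj)) ?_
    intro r
    by_cases hr : r ∈ up
    · simpa [updVal, hr] using hw i (by simp)
    · simpa [updVal, hr] using h r

theorem sat_congr {R D : Type} {ν ν' : R → D} {d d' : D} (h : ∀ r, ν r = d ↔ ν' r = d')
    (φ : RC R) : RC.sat ν d φ ↔ RC.sat ν' d' φ := by
  induction φ with
  | tt => simp [RC.sat]
  | req r => simpa [RC.sat] using h r
  | conj a b iha ihb => simp [RC.sat, iha, ihb]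
  | neg a iha => simp [RC.sat, iha]

theorem step_sim {L A R D : Type} {T : Set (RATrans L A R)} {q q' p : Config L R D} {a : A}
    {d d' : D} (hl : q.1 = q'.1) (h : ∀ r, q.2 r = d ↔ q'.2 r = d') (hs : Step T q (a, d) p) :
    ∃ p', Step T q' (a, d') p' ∧ p.1 = p'.1 ∧
      ∃ up, p.2 = updVal q.2 up d ∧ p'.2 = updVal q'.2 up d' := by
  obtain ⟨φ, up, l, hT, hsat, rfl⟩ := hs
  refine ⟨(l, updVal q'.2 up d'), ⟨φ, up, l, ?_, ?_, rfl⟩, rfl, up, rfl, rfl⟩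
  · rw [← hl]; exact hT
  · exact (sat_congr h φ).1 hsat

theorem pat_upd {R D : Type} {ν ν' : R → D} {d d' : D} (h : ∀ r, ν r = d ↔ ν' r = d')
    (hp : ∀ r s, ν r = ν s ↔ ν' r = ν' s) (up : Set R) :
    ∀ r s, updVal ν up d r = updVal ν up d s ↔ updVal ν' up d' r = updVal ν' up d' s := by
  intro r s
  by_cases hr : r ∈ up <;> by_cases hs : s ∈ up <;> simp only [updVal, hr, hs, if_true, if_false]
  · rw [eq_comm, h s, eq_comm]
  · exact h r
  · exact hp r s

theorem simul {L A R D : Type} [Fintype R] {T : Set (RATrans L A R)} (X : Finset D)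
    (hX : X.card = Fintype.card R) (W : Set D) (w : List (A × D)) :
    ∀ q q' p' : Config L R D, (∀ i ∈ w, i.2 ∈ W) → q'.1 = q.1 →
      (∀ r s, q'.2 r = q'.2 s ↔ q.2 r = q.2 s) → (∀ r, q'.2 r ∈ W → q.2 r ∈ X) →
      Run T w q' p' → (∀ r, p'.2 r ∈ W) →
      ∃ v : List (A × D), (∀ i ∈ v, i.2 ∈ X) ∧ ∃ p, Run T v q p ∧ ∀ r, p.2 r ∈ X := by
  induction w with
  | nil =>
    rintro q q' p' _ _ _ h rfl h'
    exact ⟨[], by simp, q, rfl, fun r => h r (h' r)⟩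
  | cons i w ih =>
    rintro q q' p' hw hl hp hWX ⟨m', hs, hr⟩ h'
    by_cases hall : ∀ r, q.2 r ∈ X
    · exact ⟨[], by simp, q, rfl, hall⟩
    obtain ⟨a, d⟩ := i
    have hdW : d ∈ W := hw (a, d) (by simp)
    have hx : ∃ x ∈ X, ∀ r, q'.2 r = d ↔ q.2 r = x := by
      by_cases hd : ∃ r, q'.2 r = d
      · obtain ⟨r, rfl⟩ := hd
        exact ⟨q.2 r, hWX r hdW, fun s => hp s r⟩
      · push Not at hd
        have : ∃ x ∈ X, ∀ r, q.2 r ≠ x := by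
          by_contra hcon
          push Not at hcon
          apply hall
          have hsub : X ⊆ Finset.univ.image q.2 := by
            intro x hx
            obtain ⟨r, hr⟩ := hcon x hx
            exact Finset.mem_image.2 ⟨r, Finset.mem_univ _, hr⟩
          have heq : X = Finset.univ.image q.2 :=
            Finset.eq_of_subset_of_card_le hsub (by
              rw [hX]; exact Finset.card_image_le)
          intro r
          rw [heq]
          exact Finset.mem_image_of_mem _ (Finset.mem_univ _)
        obtain ⟨x, hx, hne⟩ := this
        exact ⟨x, hx, fun r => ⟨fun h => absurd h (hd r), fun h => absurd h (hne r)⟩⟩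
    obtain ⟨x, hx, hqx⟩ := hx
    obtain ⟨m, hm, hml, up, hu', hu⟩ := step_sim hl hqx hs
    obtain ⟨v, hv, p, hp1, hp2⟩ := ih m m' p' (fun j hj => hw j (List.mem_cons_of_mem _ hj)) hml
      (by rw [hu, hu']; exact pat_upd hqx hp up)
      (by
        rw [hu, hu']
        intro r
        by_cases hr : r ∈ up
        · simp [updVal, hr, hx]
        · simpa [updVal, hr] using hWX r) hr h'
    refine ⟨(a, x) :: v, ?_, p, ⟨m, hm, hp1⟩, hp2⟩
    intro j hj
    rcases List.mem_cons.1 hj with rfl | hj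
    · exact hx
    · exact hv j hj

/-- every configuration can be driven into `X`. -/
theorem claim {L A R D : Type} [Fintype R] [Infinite D] {T : Set (RATrans L A R)}
    (hcomp : RAComplete D T) (hsync : ∃ w : List (A × D), IsSync D T w) (X : Finset D)
    (hX : X.card = Fintype.card R) (q : Config L R D) :
    ∃ v : List (A × D), (∀ i ∈ v, i.2 ∈ X) ∧ ∃ p, Run T v q p ∧ ∀ r, p.2 r ∈ X := by
  obtain ⟨w, _, qw, hqw⟩ := hsync
  let B : Finset D := (w.map Prod.snd).toFinset ∪ Finset.univ.image qw.2
  have hinf : (((B : Set D)ᶜ)).Infinite := B.finite_toSet.infinite_compl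
  obtain ⟨Y, hY, hYc⟩ := hinf.exists_subset_card_eq (Finset.univ.image q.2).card
  let e := Finset.equivOfCardEq hYc.symm
  let ν' : R → D := fun r => (e ⟨q.2 r, Finset.mem_image_of_mem _ (Finset.mem_univ _)⟩ : D)
  have hν' : ∀ r, ν' r ∉ B := fun r => hY (e _).2
  obtain ⟨p', hp'⟩ := run_exists hcomp w (q.1, ν')
  have hpe : p' = qw := by
    have : p' ∈ postWord T Set.univ w := (mem_postWord T w _ _).2 ⟨_, Set.mem_univ _, hp'⟩
    rw [hqw] at this
    exact this
  refine simul X hX (dataSet w) w q (q.1, ν') p' (fun i hi => ⟨i, hi, rfl⟩) rfl ?_ ?_ hp' ?_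
  · intro r s
    simp [ν', Subtype.ext_iff.symm]
  · intro r hr
    exfalso
    obtain ⟨i, hi, h⟩ := hr
    apply hν' r
    refine Finset.mem_union_left _ ?_
    rw [List.mem_toFinset, List.mem_map]
    exact ⟨i, hi, h⟩
  · intro r
    have := run_vals (fun d => d ∈ dataSet w ∨ ∃ s, ν' s = d) w _ _ hp'
      (fun i hi => Or.inl ⟨i, hi, rfl⟩) (fun r => Or.inr ⟨r, rfl⟩) r
    rcases this with h | ⟨s, h⟩
    · exact h
    · exfalso
      apply hν' s
      refine Finset.mem_union_right _ ?_
      rw [h, hpe]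
      exact Finset.mem_image_of_mem _ (Finset.mem_univ _)

def typ {L R D : Type} (X : Finset D) (q : Config L R D) :
    L × (R → R → Prop) × (R → X → Prop) :=
  (q.1, fun r s => q.2 r = q.2 s, fun r x => q.2 r = x)

theorem typ_eq {L R D : Type} (X : Finset D) (q q' : Config L R D) :
    typ X q = typ X q' ↔ q.1 = q'.1 ∧ (∀ r s, q.2 r = q.2 s ↔ q'.2 r = q'.2 s) ∧
      ∀ x ∈ X, ∀ r, q.2 r = x ↔ q'.2 r = x := by
  simp only [typ, Prod.mk.injEq, funext_iff, eq_iff_iff, Subtype.forall]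
  constructor
  · rintro ⟨a, b, c⟩; exact ⟨a, b, fun x hx r => c r x hx⟩
  · rintro ⟨a, b, c⟩; exact ⟨a, b, fun r x hx => c x hx r⟩

theorem run_typ {L A R D : Type} {T : Set (RATrans L A R)} (X : Finset D) (w : List (A × D)) :
    ∀ q q' p : Config L R D, (∀ i ∈ w, i.2 ∈ X) → typ X q = typ X q' → Run T w q p →
      ∃ p', Run T w q' p' ∧ typ X p = typ X p' := by
  induction w with
  | nil => rintro q q' p _ h rfl; exact ⟨q', rfl, h⟩
  | cons i w ih =>
    rintro q q' p hw h ⟨m, hs, hr⟩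
    obtain ⟨h1, h2, h3⟩ := (typ_eq X q q').1 h
    have hi : i.2 ∈ X := hw i (by simp)
    obtain ⟨m', hm', hl, up, hu, hu'⟩ := step_sim (a := i.1) (d := i.2) h1 (h3 _ hi) hs
    have ht : typ X m = typ X m' := by
      refine (typ_eq X m m').2 ⟨hl, ?_, ?_⟩
      · rw [hu, hu']; exact pat_upd (h3 _ hi) h2 up
      · rw [hu, hu']
        intro x hx r
        by_cases hr : r ∈ up
        · simp [updVal, hr]
        · simpa [updVal, hr] using h3 x hx r
    obtain ⟨p', hp', h'⟩ := ih _ _ _ (fun j hj => hw j (List.mem_cons_of_mem _ hj)) ht hr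
    exact ⟨p', ⟨m', hm', hp'⟩, h'⟩

theorem all_types {L A R D : Type} [Fintype R] [Infinite D] {T : Set (RATrans L A R)}
    (hcomp : RAComplete D T) (hdet : RADet D T)
    (hsync : ∃ w : List (A × D), IsSync D T w) (X : Finset D)
    (hX : X.card = Fintype.card R) (F : Finset (L × (R → R → Prop) × (R → X → Prop))) :
    ∃ u : List (A × D), (∀ i ∈ u, i.2 ∈ X) ∧
      ∀ q p : Config L R D, typ X q ∈ F → Run T u q p → ∀ r, p.2 r ∈ X := by
  induction F using Finset.induction_on with
  | empty => exact ⟨[], by simp, by simp⟩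
  | insert t F _ ih =>
    obtain ⟨u, hu, hF⟩ := ih
    by_cases ht : ∃ q : Config L R D, typ X q = t
    · obtain ⟨q, rfl⟩ := ht
      obtain ⟨q1, hq1⟩ := run_exists hcomp u q
      obtain ⟨v, hv, q2, hq2, hq2X⟩ := claim hcomp hsync X hX q1
      have huv : ∀ i ∈ u ++ v, i.2 ∈ X := by
        intro i hi
        rcases List.mem_append.1 hi with h | h
        · exact hu i h
        · exact hv i h
      refine ⟨u ++ v, huv, ?_⟩
      intro c p hc hr
      rcases Finset.mem_insert.1 hc with hc | hc
      · obtain ⟨p', hp', he⟩ := run_typ X (u ++ v) c q p huv hc hr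
        have : p' = q2 := run_det hdet _ _ _ _ hp' ((run_append T u v _ _).2 ⟨q1, hq1, hq2⟩)
        subst this
        intro r
        have := ((typ_eq X _ _).1 he).2.2 (p'.2 r) (hq2X r) r
        rw [this.2 rfl]
        exact hq2X r
      · obtain ⟨m, hm, hm2⟩ := (run_append T u v _ _).1 hr
        exact run_vals (· ∈ X) v _ _ hm2 hv (hF _ _ hc hm)
    · refine ⟨u, hu, fun q p hq hr => ?_⟩
      rcases Finset.mem_insert.1 hq with h | h
      · exact absurd ⟨q, h⟩ ht
      · exact hF q p h hr

/-- for every complete DRA over an infinite data domain that admits a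
synchronizing data word, there is a data word `w` with at most `|R|` distinct data
values such that every configuration reached from anywhere by reading `w` has all its
register values among the data of `w`. -/
theorem stmt0 {L A R D : Type} [Fintype L] [Fintype A] [Fintype R] [Infinite D]
    (T : Set (RATrans L A R))
    (hcomp : RAComplete D T) (hdet : RADet D T)
    (hsync : ∃ w : List (A × D), IsSync D T w) :
    ∃ w : List (A × D),
      (dataSet w).ncard ≤ Fintype.card R ∧
      postWord T (Set.univ : Set (Config L R D)) w ⊆
        {q : Config L R D | ∀ r : R, q.2 r ∈ dataSet w} := by
  obtain ⟨X, hX⟩ := Infinite.exists_subset_card_eq D (Fintype.card R)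
  obtain ⟨u, hu, hF⟩ := all_types hcomp hdet hsync X hX Finset.univ
  obtain ⟨w0, hw0, _⟩ := hsync
  obtain ⟨⟨a, _⟩, _⟩ := List.exists_mem_of_ne_nil w0 hw0
  have hv : ∀ i ∈ X.toList.map (fun x => (a, x)), i.2 ∈ X := by
    intro i hi
    obtain ⟨x, hx, rfl⟩ := List.mem_map.1 hi
    exact Finset.mem_toList.1 hx
  have hds : dataSet (u ++ X.toList.map (fun x => (a, x))) = (X : Set D) := by
    ext x
    constructor
    · rintro ⟨i, hi, rfl⟩
      rcases List.mem_append.1 hi with h | h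
      · exact hu i h
      · exact hv i h
    · intro hx
      exact ⟨(a, x), List.mem_append_right _ (List.mem_map.2 ⟨x, Finset.mem_toList.2 hx, rfl⟩), rfl⟩
  refine ⟨u ++ X.toList.map (fun x => (a, x)), ?_, ?_⟩
  · rw [hds, Set.ncard_coe_finset, hX]
  · intro p hp
    rw [hds]
    obtain ⟨q, _, hr⟩ := (mem_postWord T _ _ _).1 hp
    obtain ⟨m, hm, hm2⟩ := (run_append T _ _ _ _).1 hr
    exact run_vals (· ∈ X) _ _ _ hm2 hv (hF _ _ (Finset.mem_univ _) hm)
end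

section
/- Every complete deterministic register automaton (L, R, Σ, T) over an infinite data domain D that admits a synchronizing data word admits a synchronizing data word w with data efficiency |data(w)| ≤ 2|R| + 1. -/
open scoped Classical

namespace RAS

theorem sat_perm {R D : Type} (τ : Equiv.Perm D) (ν : R → D) (d : D) (φ : RC R) :
    RC.sat (fun r => τ (ν r)) (τ d) φ ↔ RC.sat ν d φ := by
  induction φ with
  | tt => simp [RC.sat]
  | req r => simp [RC.sat]
  | conj a b iha ihb => simp [RC.sat, iha, ihb]
  | neg a iha => simp [RC.sat, iha]

/-- action of permutations on configurations -/
def act {L R D : Type} (τ : Equiv.Perm D) (q : Config L R D) : Config L R D :=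
  (q.1, fun r => τ (q.2 r))

theorem step_perm {L A R D : Type} (T : Set (RATrans L A R)) (τ : Equiv.Perm D)
    {q q' : Config L R D} {a : A} {d : D} (h : Step T q (a, d) q') :
    Step T (act τ q) (a, τ d) (act τ q') := by
  obtain ⟨φ, up, l, h1, h2, rfl⟩ := h
  refine ⟨φ, up, l, h1, (sat_perm τ _ _ _).2 h2, ?_⟩
  simp only [act, Prod.mk.injEq, true_and]
  funext r
  simp only [updVal]
  split_ifs <;> rfl

/-- extending a partial injection -/
theorem exists_perm {ι D : Type} [Finite ι] [Infinite D] (f g : ι → D)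
    (h : ∀ a b, f a = f b ↔ g a = g b) : ∃ τ : Equiv.Perm D, ∀ a, τ (f a) = g a := by
  obtain ⟨n, ⟨e⟩⟩ := Finite.exists_equiv_fin (Set.range f)
  choose s hs using fun x : Set.range f => x.2
  let x : Fin n ↪ D := ⟨fun i => (e.symm i : D), fun i j hij => by
    simpa using Subtype.ext hij⟩
  let y : Fin n ↪ D := ⟨fun i => g (s (e.symm i)), fun i j hij => by
    have := (h _ _).2 hij
    rw [hs, hs] at this
    simpa using Subtype.ext this⟩
  obtain ⟨τ, hτ⟩ := (Equiv.Perm.isMultiplyPretransitive D n).exists_smul_eq x y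
  refine ⟨τ, fun a => ?_⟩
  have := DFunLike.congr_fun hτ (e ⟨f a, a, rfl⟩)
  have h2 : τ (e.symm (e ⟨f a, a, rfl⟩) : D) = g (s (e.symm (e ⟨f a, a, rfl⟩))) := this
  rw [Equiv.symm_apply_apply] at h2
  rw [h2]
  exact (h _ _).1 (hs _)

section
variable {L A R D : Type} (δ : Config L R D → A × D → Config L R D)

/-- run -/
def run (q : Config L R D) (w : List (A × D)) : Config L R D := w.foldl δ q

theorem run_append (q : Config L R D) (u v : List (A × D)) :
    run δ q (u ++ v) = run δ (run δ q u) v := by simp [run]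

theorem postWord_eq (T : Set (RATrans L A R)) (hδ : ∀ q i q', Step T q i q' ↔ q' = δ q i)
    (w : List (A × D)) (S : Set (Config L R D)) :
    postWord T S w = (fun q => run δ q w) '' S := by
  induction w generalizing S with
  | nil => simp [postWord, run]
  | cons i w ih =>
    have : postStep T S i = (fun q => δ q i) '' S := by
      ext q'; simp [postStep, hδ, eq_comm]
    rw [postWord, ih, this, Set.image_image]
    rfl

variable (heq : ∀ (τ : Equiv.Perm D) q a d, δ (act τ q) (a, τ d) = act τ (δ q (a, d)))
  (hval : ∀ q i r, (δ q i).2 r = i.2 ∨ (δ q i).2 r = q.2 r)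

include heq in
theorem run_perm (τ : Equiv.Perm D) (w : List (A × D)) (hw : ∀ i ∈ w, τ i.2 = i.2)
    (q : Config L R D) : run δ (act τ q) w = act τ (run δ q w) := by
  induction w generalizing q with
  | nil => rfl
  | cons i w ih =>
    have h1 := heq τ q i.1 i.2
    rw [hw i (by simp)] at h1
    show run δ (δ (act τ q) i) w = act τ (run δ (δ q i) w)
    rw [← ih (fun j hj => hw j (by simp [hj])), ← h1]

include hval in
theorem run_mem (Z : Set D) (w : List (A × D)) (hw : ∀ i ∈ w, i.2 ∈ Z)
    (q : Config L R D) (hq : ∀ r, q.2 r ∈ Z) (r : R) : (run δ q w).2 r ∈ Z := by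
  induction w generalizing q with
  | nil => exact hq r
  | cons i w ih =>
    refine ih (fun j hj => hw j (by simp [hj])) (δ q i) (fun r => ?_)
    rcases hval q i r with h | h <;> rw [h]
    · exact hw i (by simp)
    · exact hq r

include heq hval in
theorem sim [Fintype R] (Z : Finset D) (hZ : Z.card = 2 * Fintype.card R + 1) (W : Set D)
    (w : List (A × D)) (hw : ∀ i ∈ w, i.2 ∈ W) (p q : Config L R D) (σ : Equiv.Perm D)
    (hp : ∀ r, p.2 r ∈ W → σ (p.2 r) ∈ Z) (hq : ∀ r, q.2 r ∈ W → σ (q.2 r) ∈ Z) :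
    ∃ (v : List (A × D)) (σ' : Equiv.Perm D), (∀ i ∈ v, i.2 ∈ Z) ∧
      run δ (act σ p) v = act σ' (run δ p w) ∧ run δ (act σ q) v = act σ' (run δ q w) ∧
      (∀ r, (run δ p w).2 r ∈ W → σ' ((run δ p w).2 r) ∈ Z) := by
  induction w generalizing p q σ with
  | nil => exact ⟨[], σ, by simp, rfl, rfl, hp⟩
  | cons i w ih =>
    obtain ⟨a, d⟩ := i
    have key : ∃ σ₁ : Equiv.Perm D, (∀ r, σ₁ (p.2 r) = σ (p.2 r)) ∧
        (∀ r, σ₁ (q.2 r) = σ (q.2 r)) ∧ σ₁ d ∈ Z := by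
      by_cases hd : (∃ r, p.2 r = d) ∨ (∃ r, q.2 r = d)
      · refine ⟨σ, fun _ => rfl, fun _ => rfl, ?_⟩
        have hdW : d ∈ W := hw (a, d) (by simp)
        rcases hd with ⟨r, rfl⟩ | ⟨r, rfl⟩
        · exact hp r hdW
        · exact hq r hdW
      · push Not at hd
        obtain ⟨z, hz, hz'⟩ : ∃ z ∈ Z, z ∉ (Finset.univ.image fun r => σ (p.2 r)) ∪
            (Finset.univ.image fun r => σ (q.2 r)) := by
          apply Finset.exists_mem_notMem_of_card_lt_card
          have h1 := Finset.card_union_le (Finset.univ.image fun r => σ (p.2 r))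
            (Finset.univ.image fun r => σ (q.2 r))
          have h2 := Finset.card_image_le (s := Finset.univ) (f := fun r => σ (p.2 r))
          have h3 := Finset.card_image_le (s := Finset.univ) (f := fun r => σ (q.2 r))
          rw [Finset.card_univ] at h2 h3
          omega
        simp only [Finset.mem_union, Finset.mem_image, Finset.mem_univ, true_and, not_or,
          not_exists] at hz'
        refine ⟨σ.trans (Equiv.swap (σ d) z), fun r => ?_, fun r => ?_, by simpa using hz⟩
        · exact Equiv.swap_apply_of_ne_of_ne (fun h => hd.1 r (σ.injective h)) (hz'.1 r)
        · exact Equiv.swap_apply_of_ne_of_ne (fun h => hd.2 r (σ.injective h)) (hz'.2 r)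
    obtain ⟨σ₁, h1, h2, h3⟩ := key
    have e1 : act σ p = act σ₁ p := by simp [act, h1]
    have e2 : act σ q = act σ₁ q := by simp [act, h2]
    have hp' : ∀ r, (δ p (a, d)).2 r ∈ W → σ₁ ((δ p (a, d)).2 r) ∈ Z := by
      intro r hr
      rcases hval p (a, d) r with h | h <;> rw [h] at hr ⊢
      · exact h3
      · rw [h1]; exact hp r hr
    have hq' : ∀ r, (δ q (a, d)).2 r ∈ W → σ₁ ((δ q (a, d)).2 r) ∈ Z := by
      intro r hr
      rcases hval q (a, d) r with h | h <;> rw [h] at hr ⊢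
      · exact h3
      · rw [h2]; exact hq r hr
    obtain ⟨v, σ', g1, g2, g3, g4⟩ := ih (fun j hj => hw j (by simp [hj])) _ _ σ₁ hp' hq'
    refine ⟨(a, σ₁ d) :: v, σ', ?_, ?_, ?_, g4⟩
    · intro j hj
      rcases List.mem_cons.1 hj with rfl | hj
      · exact h3
      · exact g1 j hj
    · rw [e1]
      show run δ (δ (act σ₁ p) (a, σ₁ d)) v = _
      rw [heq, g2]; rfl
    · rw [e2]
      show run δ (δ (act σ₁ q) (a, σ₁ d)) v = _
      rw [heq, g3]; rfl

include heq hval in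
theorem phase1 [Fintype R] [Infinite D] (Z : Finset D) (hZ : Z.card = 2 * Fintype.card R + 1)
    (w : List (A × D)) (q₀ : Config L R D) (hw : ∀ p, run δ p w = q₀) (p : Config L R D) :
    ∃ v : List (A × D), (∀ i ∈ v, i.2 ∈ Z) ∧ ∀ r, (run δ p v).2 r ∈ Z := by
  let W : Finset D := (w.map Prod.snd).toFinset
  have hWw : ∀ i ∈ w, i.2 ∈ (W : Set D) := by
    intro i hi
    simp only [W, List.coe_toFinset, Set.mem_setOf_eq, List.mem_map]
    exact ⟨i, hi, rfl⟩
  have hq₀ : ∀ r, q₀.2 r ∈ W := by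
    intro r
    by_contra hr
    obtain ⟨e, he⟩ := Infinite.exists_notMem_finset (insert (q₀.2 r) W)
    simp only [Finset.mem_insert, not_or] at he
    have h := run_perm δ heq (Equiv.swap (q₀.2 r) e) w (fun i hi =>
      Equiv.swap_apply_of_ne_of_ne (fun h => hr (h ▸ hWw i hi)) (fun h => he.2 (h ▸ hWw i hi))) q₀
    rw [hw, hw] at h
    have h' := congrArg (fun c : Config L R D => c.2 r) h
    simp [act] at h'
    exact he.1 h'.symm
  obtain ⟨em⟩ : Nonempty (D ↪ ((W : Set D)ᶜ : Set D)) := by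
    have := Cardinal.mk_compl_finset_of_infinite W
    exact Cardinal.le_def _ _ |>.1 this.ge
  obtain ⟨τ, hτ⟩ := exists_perm (fun r => (em (p.2 r) : D)) p.2 (by
    intro a b
    simp [← Subtype.ext_iff])
  let p' : Config L R D := (p.1, fun r => (em (p.2 r) : D))
  have hp' : act τ p' = p := by
    simp only [act, p', hτ]
  have hd : ∀ r, p'.2 r ∈ (W : Set D) → τ (p'.2 r) ∈ Z := fun r hr =>
    absurd hr (em (p.2 r)).2
  obtain ⟨v, σ', g1, g2, -, g4⟩ := sim δ heq hval Z hZ W w hWw p' p' τ hd hd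
  refine ⟨v, g1, fun r => ?_⟩
  rw [hp', hw] at g2
  rw [hw] at g4
  rw [g2]
  exact g4 r (hq₀ r)

/-- type of a configuration relative to Z -/
def ctype (Z : Finset D) (p : Config L R D) : L × Set ((R ⊕ Z) × (R ⊕ Z)) :=
  (p.1, {x | Sum.elim p.2 (fun z : Z => (z : D)) x.1 = Sum.elim p.2 (fun z : Z => (z : D)) x.2})

include heq hval in
theorem phase1' [Fintype L] [Fintype R] [Infinite D] (Z : Finset D)
    (hZ : Z.card = 2 * Fintype.card R + 1)
    (w : List (A × D)) (q₀ : Config L R D) (hw : ∀ p, run δ p w = q₀) :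
    ∃ v : List (A × D), (∀ i ∈ v, i.2 ∈ Z) ∧ ∀ (p : Config L R D) r, (run δ p v).2 r ∈ Z := by
  have key : ∀ K : Finset (L × Set ((R ⊕ Z) × (R ⊕ Z))),
      ∃ v : List (A × D), (∀ i ∈ v, i.2 ∈ Z) ∧
        ∀ p : Config L R D, ctype Z p ∈ K → ∀ r, (run δ p v).2 r ∈ Z := by
    intro K
    induction K using Finset.induction_on with
    | empty => exact ⟨[], by simp, by simp⟩
    | insert t K ht ih =>
      obtain ⟨u, hu, hu'⟩ := ih
      by_cases hex : ∃ p : Config L R D, ctype Z p = t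
      · obtain ⟨p, hp⟩ := hex
        obtain ⟨v, hv, hv'⟩ := phase1 δ heq hval Z hZ w q₀ hw (run δ p u)
        have huv : ∀ i ∈ u ++ v, i.2 ∈ Z := by
          intro i hi
          rcases List.mem_append.1 hi with h | h
          · exact hu i h
          · exact hv i h
        refine ⟨u ++ v, huv, ?_⟩
        intro p' hp' r
        rcases Finset.mem_insert.1 hp' with h | h
        · have hpp : ctype Z p = ctype Z p' := hp.trans h.symm
          simp only [ctype, Prod.mk.injEq] at hpp
          obtain ⟨τ, hτ⟩ := exists_perm (Sum.elim p.2 (fun z : Z => (z : D)))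
            (Sum.elim p'.2 (fun z : Z => (z : D))) (fun a b => by
              have := Set.ext_iff.1 hpp.2 (a, b)
              simpa only [Set.mem_setOf_eq] using this)
          have hτZ : ∀ z ∈ Z, τ z = z := fun z hz => hτ (Sum.inr ⟨z, hz⟩)
          have hpe : act τ p = p' := by
            apply Prod.ext
            · exact hpp.1
            · funext r; exact hτ (Sum.inl r)
          rw [← hpe, run_perm δ heq τ (u ++ v) (fun i hi => hτZ _ (huv i hi)), run_append]
          show τ _ ∈ Z
          rw [hτZ _ (hv' r)]
          exact hv' r
        · rw [run_append]
          exact run_mem δ hval (Z : Set D) v hv _ (hu' p' h) r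
      · refine ⟨u, hu, fun p hp => ?_⟩
        rcases Finset.mem_insert.1 hp with h | h
        · exact absurd ⟨p, h⟩ hex
        · exact hu' p h
  obtain ⟨v, h1, h2⟩ := key Finset.univ
  exact ⟨v, h1, fun p => h2 p (Finset.mem_univ _)⟩

include heq hval in
theorem phase2 [Fintype R] (Z : Finset D)
    (hZ : Z.card = 2 * Fintype.card R + 1)
    (w : List (A × D)) (q₀ : Config L R D) (hw : ∀ p, run δ p w = q₀)
    (S : Finset (Config L R D)) (hS : ∀ p ∈ S, ∀ r, p.2 r ∈ Z) :
    ∃ v : List (A × D), (∀ i ∈ v, i.2 ∈ Z) ∧ ∀ p ∈ S, ∀ q ∈ S, run δ p v = run δ q v := by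
  induction S using Finset.induction_on with
  | empty => exact ⟨[], by simp, by simp⟩
  | insert t K ht ih =>
    obtain ⟨u, hu, hu'⟩ := ih (fun p hp => hS p (by simp [hp]))
    rcases K.eq_empty_or_nonempty with rfl | ⟨b, hb⟩
    · exact ⟨[], by simp, by simp⟩
    · have m1 := run_mem δ hval (Z : Set D) u hu t (hS t (by simp))
      have m2 := run_mem δ hval (Z : Set D) u hu b (hS b (by simp [hb]))
      obtain ⟨v, σ', g1, g2, g3, -⟩ := sim δ heq hval Z hZ Set.univ w (by simp)
        (run δ t u) (run δ b u) (Equiv.refl D) (fun r _ => m1 r) (fun r _ => m2 r)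
      rw [hw] at g2 g3
      have g : run δ (run δ t u) v = run δ (run δ b u) v := g2.trans g3.symm
      have hall : ∀ p ∈ insert t K, run δ p (u ++ v) = run δ b (u ++ v) := by
        intro p hp
        rw [run_append, run_append]
        rcases Finset.mem_insert.1 hp with rfl | h
        · exact g
        · rw [hu' p h b hb]
      refine ⟨u ++ v, ?_, fun p hp q hq => (hall p hp).trans (hall q hq).symm⟩
      intro i hi
      rcases List.mem_append.1 hi with h | h
      · exact hu i h
      · exact g1 i h

end

end RAS

/-- every complete DRA over an infinite data domain that admits a
synchronizing data word admits one with data efficiency at most `2|R| + 1`. -/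
theorem stmt2 {L A R D : Type} [Fintype L] [Fintype A] [Fintype R] [Infinite D]
    (T : Set (RATrans L A R))
    (hcomp : RAComplete D T) (hdet : RADet D T)
    (hsync : ∃ w : List (A × D), IsSync D T w) :
    ∃ w : List (A × D), IsSync D T w ∧ (dataSet w).ncard ≤ 2 * Fintype.card R + 1 := by
  obtain ⟨w, hne, q₀, hw⟩ := hsync
  choose δ hδ' using hcomp
  have hδ : ∀ q i q', Step T q i q' ↔ q' = δ q i := fun q i q' =>
    ⟨fun h => hdet q i _ _ h (hδ' q i), fun h => h ▸ hδ' q i⟩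
  have heq : ∀ (τ : Equiv.Perm D) q a d,
      δ (RAS.act τ q) (a, τ d) = RAS.act τ (δ q (a, d)) := fun τ q a d =>
    ((hδ _ _ _).1 (RAS.step_perm T τ (hδ' q (a, d)))).symm
  have hval : ∀ q i r, (δ q i).2 r = i.2 ∨ (δ q i).2 r = q.2 r := by
    intro q i r
    obtain ⟨φ, up, l, -, -, h⟩ := hδ' q i
    rw [h]
    simp only [updVal]
    split_ifs <;> simp
  have hw' : ∀ p, RAS.run δ p w = q₀ := by
    intro p
    rw [RAS.postWord_eq δ T hδ] at hw
    have : RAS.run δ p w ∈ (fun q => RAS.run δ q w) '' Set.univ := ⟨p, trivial, rfl⟩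
    rw [hw] at this
    exact this
  obtain ⟨Z, hZ⟩ := Infinite.exists_subset_card_eq D (2 * Fintype.card R + 1)
  obtain ⟨u, hu, hu'⟩ := RAS.phase1' δ heq hval Z hZ w q₀ hw'
  let S : Finset (Config L R D) := Finset.univ ×ˢ Fintype.piFinset (fun _ => Z)
  have hS : ∀ p : Config L R D, p ∈ S ↔ ∀ r, p.2 r ∈ Z := by
    intro p
    simp [S, Finset.mem_product, Fintype.mem_piFinset]
  obtain ⟨v, hv, hv'⟩ := RAS.phase2 δ heq hval Z hZ w q₀ hw' S (fun p hp => (hS p).1 hp)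
  obtain ⟨⟨a, _⟩, -⟩ := List.exists_mem_of_ne_nil w hne
  obtain ⟨z, hz⟩ : Z.Nonempty := Finset.card_pos.1 (by omega)
  refine ⟨(u ++ v) ++ [(a, z)], ⟨by simp, RAS.run δ q₀ ((u ++ v) ++ [(a, z)]), ?_⟩, ?_⟩
  · rw [RAS.postWord_eq δ T hδ]
    apply Set.eq_singleton_iff_unique_mem.2
    refine ⟨⟨q₀, trivial, rfl⟩, ?_⟩
    rintro _ ⟨p, -, rfl⟩
    simp only [RAS.run_append]
    rw [hv' (RAS.run δ p u) ((hS _).2 (hu' p)) (RAS.run δ q₀ u) ((hS _).2 (hu' q₀))]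
  · rw [← hZ, ← Set.ncard_coe_finset]
    apply Set.ncard_le_ncard _ Z.finite_toSet
    rintro d ⟨i, hi, rfl⟩
    simp only [List.mem_append, List.mem_singleton] at hi
    rcases hi with (h | h) | rfl
    · exact hu i h
    · exact hv i h
    · exact hz
end

section
/- Let A be a complete deterministic register automaton with k registers over an infinite data domain D, let q_1, q_2 be configurations of A, and let X ⊆ D be a set of exactly 2k + 1 data values containing every register value of q_1 and every register value of q_2. If there exists a data word w with |post({q_1, q_2}, w)| = 1, then there exists a data word w' ∈ (Σ × X)^* with |post({q_1, q_2}, w')| = 1. -/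
open scoped Classical

theorem sat_perm {R D : Type} (π : Equiv.Perm D) (ν : R → D) (d : D) (φ : RC R) :
    RC.sat (fun r => π (ν r)) (π d) φ ↔ RC.sat ν d φ := by
  induction φ with
  | tt => simp [RC.sat]
  | req r => simp [RC.sat]
  | conj a b iha ihb => simp [RC.sat, iha, ihb]
  | neg a ih => simp [RC.sat, ih]

theorem step_perm {L A R D : Type} (T : Set (RATrans L A R)) (π : Equiv.Perm D)
    (q q' : Config L R D) (a : A) (d : D) (h : Step T q (a, d) q') :
    Step T (q.1, fun r => π (q.2 r)) (a, π d) (q'.1, fun r => π (q'.2 r)) := by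
  obtain ⟨φ, up, l, hT, hs, rfl⟩ := h
  refine ⟨φ, up, l, hT, (sat_perm π q.2 d φ).2 hs, ?_⟩
  refine Prod.ext rfl ?_
  funext r
  simp only [updVal]
  split_ifs <;> rfl

theorem postStep_pair {L A R D : Type} (T : Set (RATrans L A R)) (hdet : RADet D T)
    (q₁ q₂ p₁ p₂ : Config L R D) (i : A × D) (h₁ : Step T q₁ i p₁) (h₂ : Step T q₂ i p₂) :
    postStep T {q₁, q₂} i = {p₁, p₂} := by
  ext x
  simp only [postStep, Set.mem_setOf_eq, Set.mem_insert_iff, Set.mem_singleton_iff]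
  constructor
  · rintro ⟨q, rfl | rfl, h⟩
    · exact Or.inl (hdet _ _ _ _ h h₁)
    · exact Or.inr (hdet _ _ _ _ h h₂)
  · rintro (rfl | rfl)
    · exact ⟨q₁, Or.inl rfl, h₁⟩
    · exact ⟨q₂, Or.inr rfl, h₂⟩

theorem step_vals {L A R D : Type} (T : Set (RATrans L A R)) (q q' : Config L R D) (i : A × D)
    (h : Step T q i q') (r : R) : q'.2 r = i.2 ∨ q'.2 r = q.2 r := by
  obtain ⟨φ, up, l, hT, hs, rfl⟩ := h
  simp only [updVal]
  split_ifs <;> simp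

theorem exists_fresh {R D : Type} [Fintype R] (X : Set D)
    (hX : X.ncard = 2 * Fintype.card R + 1) (f g : R → D) :
    ∃ x ∈ X, (∀ r, f r ≠ x) ∧ ∀ r, g r ≠ x := by
  by_contra! hc
  have hsub : X ⊆ ((Finset.univ.image f ∪ Finset.univ.image g : Finset D) : Set D) := by
    intro x hx
    by_cases hf : ∀ r, f r ≠ x
    · obtain ⟨r, hr⟩ := hc x hx hf
      simp only [Finset.coe_union, Set.mem_union, Finset.mem_coe, Finset.mem_image]
      exact Or.inr ⟨r, Finset.mem_univ _, hr⟩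
    · push Not at hf
      obtain ⟨r, hr⟩ := hf
      simp only [Finset.coe_union, Set.mem_union, Finset.mem_coe, Finset.mem_image]
      exact Or.inl ⟨r, Finset.mem_univ _, hr⟩
  have h1 := Set.ncard_le_ncard hsub (Finset.finite_toSet _)
  rw [Set.ncard_coe_finset] at h1
  have h2 := Finset.card_union_le (Finset.univ.image f) (Finset.univ.image g)
  have h3 : (Finset.univ.image f).card ≤ Fintype.card R := Finset.card_image_le
  have h4 : (Finset.univ.image g).card ≤ Fintype.card R := Finset.card_image_le
  omega

theorem merge_aux {L A R D : Type} [Fintype R] (T : Set (RATrans L A R))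
    (hcomp : RAComplete D T) (hdet : RADet D T) (X : Set D)
    (hX : X.ncard = 2 * Fintype.card R + 1) (w : List (A × D)) :
    ∀ (π : Equiv.Perm D) (q₁ q₂ : Config L R D),
    (∀ r : R, π (q₁.2 r) ∈ X) → (∀ r : R, π (q₂.2 r) ∈ X) →
    (∃ q : Config L R D, postWord T {q₁, q₂} w = {q}) →
    ∃ w' : List (A × D), (∀ p ∈ w', p.2 ∈ X) ∧
      ∃ q : Config L R D, postWord T
        {(q₁.1, fun r => π (q₁.2 r)), (q₂.1, fun r => π (q₂.2 r))} w' = {q} := by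
  induction w with
  | nil =>
    rintro π q₁ q₂ h₁ h₂ ⟨q, hq⟩
    have e₁ : q₁ ∈ ({q} : Set (Config L R D)) := by rw [← hq]; simp [postWord]
    have e₂ : q₂ ∈ ({q} : Set (Config L R D)) := by rw [← hq]; simp [postWord]
    rw [Set.mem_singleton_iff] at e₁ e₂
    subst e₁
    subst e₂
    exact ⟨[], by simp, _, by simp only [postWord]; exact Set.pair_eq_singleton _⟩
  | cons i w ih =>
    obtain ⟨a, d⟩ := i
    have key : ∀ (π : Equiv.Perm D) (q₁ q₂ : Config L R D),
        (∀ r : R, π (q₁.2 r) ∈ X) → (∀ r : R, π (q₂.2 r) ∈ X) → π d ∈ X →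
        (∃ q : Config L R D, postWord T {q₁, q₂} ((a, d) :: w) = {q}) →
        ∃ w' : List (A × D), (∀ p ∈ w', p.2 ∈ X) ∧
          ∃ q : Config L R D, postWord T
            {(q₁.1, fun r => π (q₁.2 r)), (q₂.1, fun r => π (q₂.2 r))} w' = {q} := by
      rintro π q₁ q₂ h₁ h₂ hd ⟨q, hq⟩
      obtain ⟨p₁, s₁⟩ := hcomp q₁ (a, d)
      obtain ⟨p₂, s₂⟩ := hcomp q₂ (a, d)
      rw [postWord, postStep_pair T hdet _ _ _ _ _ s₁ s₂] at hq
      obtain ⟨w', hw', q', hq'⟩ := ih π p₁ p₂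
        (fun r => by rcases step_vals T _ _ _ s₁ r with h | h <;> rw [h]; exacts [hd, h₁ r])
        (fun r => by rcases step_vals T _ _ _ s₂ r with h | h <;> rw [h]; exacts [hd, h₂ r])
        ⟨q, hq⟩
      refine ⟨(a, π d) :: w', ?_, q', ?_⟩
      · intro p hp
        rcases List.mem_cons.1 hp with rfl | hp
        · exact hd
        · exact hw' p hp
      · rw [postWord, postStep_pair T hdet _ _ _ _ _ (step_perm T π _ _ _ _ s₁)
          (step_perm T π _ _ _ _ s₂)]
        exact hq'
    intro π q₁ q₂ h₁ h₂ hq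
    by_cases hd : π d ∈ X
    · exact key π q₁ q₂ h₁ h₂ hd hq
    · obtain ⟨x, hx, f₁, f₂⟩ := exists_fresh X hX (fun r => π (q₁.2 r)) (fun r => π (q₂.2 r))
      have g₁ : ∀ r, (π.trans (Equiv.swap (π d) x)) (q₁.2 r) = π (q₁.2 r) := fun r =>
        Equiv.swap_apply_of_ne_of_ne (fun h => hd (h ▸ h₁ r)) (f₁ r)
      have g₂ : ∀ r, (π.trans (Equiv.swap (π d) x)) (q₂.2 r) = π (q₂.2 r) := fun r =>
        Equiv.swap_apply_of_ne_of_ne (fun h => hd (h ▸ h₂ r)) (f₂ r)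
      have := key (π.trans (Equiv.swap (π d) x)) q₁ q₂
        (fun r => by rw [g₁]; exact h₁ r) (fun r => by rw [g₂]; exact h₂ r)
        (by simpa using hx) hq
      simpa only [g₁, g₂] using this

/-- given a complete `k`-DRA, configurations `q₁, q₂`, and a set `X` of
exactly `2k + 1` data values containing all register values of `q₁` and `q₂`, if some
data word merges `q₁` and `q₂` into a single configuration, then some data word using
only data from `X` does so as well. -/
theorem stmt3 {L A R D : Type} [Fintype L] [Fintype A] [Fintype R] [Infinite D]
    (T : Set (RATrans L A R))
    (hcomp : RAComplete D T) (hdet : RADet D T)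
    (q₁ q₂ : Config L R D) (X : Set D)
    (hX : X.ncard = 2 * Fintype.card R + 1)
    (hq₁ : ∀ r : R, q₁.2 r ∈ X) (hq₂ : ∀ r : R, q₂.2 r ∈ X)
    (hmerge : ∃ (w : List (A × D)) (q : Config L R D), postWord T {q₁, q₂} w = {q}) :
    ∃ w' : List (A × D), (∀ p ∈ w', p.2 ∈ X) ∧
      ∃ q : Config L R D, postWord T {q₁, q₂} w' = {q} := by
  obtain ⟨w, q, hq⟩ := hmerge
  exact merge_aux T hcomp hdet X hX w (Equiv.refl D) q₁ q₂ hq₁ hq₂ ⟨q, hq⟩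
end

section
/- Let A = (L, R, Σ, T) be a complete deterministic register automaton with k registers over an infinite data domain D. Suppose there exist a data word w_0 and a finite set X ⊆ D such that post(L × D^k, w_0) ⊆ L × X^k, and suppose that for every pair of configurations q_1, q_2 ∈ L × X^k there exists a data word u ∈ (Σ × X)^* with |post({q_1, q_2}, u)| = 1. Then A has a synchronizing data word. -/
open scoped Classical

theorem postWord_eq_image {L A R D : Type} (T : Set (RATrans L A R))
    (f : Config L R D → A × D → Config L R D)
    (hf : ∀ q i q', Step T q i q' ↔ q' = f q i) (w : List (A × D)) :
    ∀ S : Set (Config L R D), postWord T S w = (fun q => w.foldl f q) '' S := by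
  induction w with
  | nil => intro S; simp [postWord]
  | cons i w ih =>
    intro S
    have h : postStep T S i = (fun q => f q i) '' S := by
      ext q'
      simp only [postStep, Set.mem_setOf_eq, hf, Set.mem_image, eq_comm]
    rw [postWord, ih, h, Set.image_image]
    rfl

theorem foldl_mem_X {L A R D : Type} (T : Set (RATrans L A R))
    (f : Config L R D → A × D → Config L R D)
    (hf : ∀ q i q', Step T q i q' ↔ q' = f q i) (X : Set D) (w : List (A × D)) :
    ∀ q : Config L R D, (∀ p ∈ w, p.2 ∈ X) → (∀ r, q.2 r ∈ X) →
      ∀ r, (w.foldl f q).2 r ∈ X := by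
  induction w with
  | nil => intro q _ hq; exact hq
  | cons i w ih =>
    intro q hw hq
    refine ih (f q i) (fun p hp => hw p (List.mem_cons_of_mem _ hp)) ?_
    obtain ⟨φ, up, l, _, _, h⟩ := (hf q i (f q i)).2 rfl
    intro r
    rw [h]
    simp only [updVal]
    split_ifs
    · exact hw i List.mem_cons_self
    · exact hq r

/-- if a complete DRA admits a data word `w₀` and a finite set `X ⊆ D`
such that `post(L × D^k, w₀) ⊆ L × X^k`, and every pair of configurations with all
register values in `X` can be merged into a single configuration by a data word over
`Σ × X`, then the DRA has a synchronizing data word. -/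
theorem stmt5 {L A R D : Type} [Fintype L] [Fintype A] [Fintype R] [Infinite D]
    [Nonempty L] [Nonempty A]
    (T : Set (RATrans L A R))
    (hcomp : RAComplete D T) (hdet : RADet D T)
    (hyp : ∃ (w₀ : List (A × D)) (X : Set D), X.Finite ∧
      postWord T (Set.univ : Set (Config L R D)) w₀ ⊆
        {q : Config L R D | ∀ r : R, q.2 r ∈ X} ∧
      ∀ q₁ q₂ : Config L R D, (∀ r : R, q₁.2 r ∈ X) → (∀ r : R, q₂.2 r ∈ X) →
        ∃ u : List (A × D), (∀ p ∈ u, p.2 ∈ X) ∧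
          ∃ q : Config L R D, postWord T {q₁, q₂} u = {q}) :
    ∃ w : List (A × D), IsSync D T w := by
  obtain ⟨w₀, X, hX, hw₀, hpair⟩ := hyp
  choose f hf' using hcomp
  have hf : ∀ q i q', Step T q i q' ↔ q' = f q i := fun q i q' =>
    ⟨fun h => hdet q i _ _ h (hf' q i), fun h => h ▸ hf' q i⟩
  have key : ∀ n : ℕ, ∀ S : Set (Config L R D), S.Finite → S.Nonempty → S.ncard ≤ n →
      (∀ q ∈ S, ∀ r, q.2 r ∈ X) →
      ∃ w : List (A × D), ∃ q, (fun q => w.foldl f q) '' S = {q} := by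
    intro n
    induction n with
    | zero =>
      intro S hS hne hc _
      have := (Set.ncard_pos hS).2 hne
      omega
    | succ n ih =>
      intro S hS hne hc hSX
      by_cases hsub : S.Subsingleton
      · obtain ⟨q, hq⟩ := hne
        refine ⟨[], q, ?_⟩
        have : S = {q} := hsub.eq_singleton_of_mem hq
        simp [this]
      · rw [Set.not_subsingleton_iff] at hsub
        obtain ⟨q₁, h₁, q₂, h₂, hne'⟩ := hsub
        obtain ⟨u, huX, q, hu⟩ := hpair q₁ q₂ (hSX _ h₁) (hSX _ h₂)
        rw [postWord_eq_image T f hf] at hu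
        have e₁ : u.foldl f q₁ = q := by
          have : u.foldl f q₁ ∈ ({q} : Set _) := hu ▸ ⟨q₁, by simp, rfl⟩
          simpa using this
        have e₂ : u.foldl f q₂ = q := by
          have : u.foldl f q₂ ∈ ({q} : Set _) := hu ▸ ⟨q₂, by simp, rfl⟩
          simpa using this
        have hlt : ((fun q => u.foldl f q) '' S).ncard < S.ncard := by
          refine lt_of_le_of_ne (Set.ncard_image_le hS) fun h => ?_
          exact hne' (Set.injOn_of_ncard_image_eq h hS h₁ h₂ (e₁.trans e₂.symm))
        obtain ⟨w, q', hw⟩ := ih _ (hS.image (fun q => u.foldl f q)) (hne.image _) (by omega) (by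
          rintro _ ⟨p, hp, rfl⟩
          exact foldl_mem_X T f hf X u p huX (hSX p hp))
        refine ⟨u ++ w, q', ?_⟩
        rw [← hw, Set.image_image]
        simp only [List.foldl_append]
  have hfin : {q : Config L R D | ∀ r : R, q.2 r ∈ X}.Finite := by
    have h := (Set.finite_univ (α := L)).prod (Set.Finite.pi' (fun _ : R => hX))
    exact h.subset fun q hq => ⟨trivial, hq⟩
  rw [postWord_eq_image T f hf] at hw₀
  obtain ⟨w, q, hw⟩ := key _ _ (hfin.subset hw₀) (Set.univ_nonempty.image _) le_rfl
    (fun q hq => hw₀ hq)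
  obtain ⟨a⟩ := ‹Nonempty A›
  obtain ⟨d⟩ := (inferInstance : Nonempty D)
  refine ⟨w₀ ++ w ++ [(a, d)], by simp, f q (a, d), ?_⟩
  rw [postWord_eq_image T f hf, ← Set.image_singleton (f := fun q => f q (a, d)), ← hw,
    Set.image_image, Set.image_image]
  simp only [List.foldl_append, List.foldl_cons, List.foldl_nil]
end

section
/- For every n ≥ 1, every synchronizing data word for the deterministic register automaton R_n (defined in the context) has data efficiency at least n + 1. -/
open scoped Classical

/-- Locations of the DRA `R_{n+1}` from the paper: `init`, `synch`, and two chains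
`left i` (= `ℓ_{i+1}`) and `right i` (= `ℓ'_{i+1}`) for `i : Fin (n+1)`. -/
inductive RnLoc (n : ℕ) : Type
  | init : RnLoc n
  | synch : RnLoc n
  | left : Fin (n + 1) → RnLoc n
  | right : Fin (n + 1) → RnLoc n

/-- Disjunction of register constraints, expressed via conjunction and negation. -/
def RC.or {R : Type} (φ ψ : RC R) : RC R := RC.neg (RC.conj (RC.neg φ) (RC.neg ψ))

/-- The constraint `⋁_{r ∈ l} (= r)` (an empty disjunction is false). -/
def bigOrEq {R : Type} (l : List R) : RC R :=
  l.foldr (fun r acc => RC.or (RC.req r) acc) (RC.neg RC.tt)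

/-- The constraint `⋀_{r ∈ l} ¬(= r)`. -/
def bigAndNeq {R : Type} (l : List R) : RC R :=
  l.foldr (fun r acc => RC.conj (RC.neg (RC.req r)) acc) RC.tt

/-- The registers `r_1, …, r_{i+1}`, i.e. all `j ≤ i`. -/
def regsUpTo (n : ℕ) (i : Fin (n + 1)) : List (Fin (n + 1)) :=
  (List.finRange (n + 1)).filter (fun j => j ≤ i)

/-- The transitions of the DRA `R_{n+1}` from the paper (all over the single letter
`()`), with registers `Fin (n+1)`. -/
inductive RnTrans (n : ℕ) : RATrans (RnLoc n) Unit (Fin (n + 1)) → Prop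
  | initL : RnTrans n (RnLoc.init, (), RC.req 0, {0}, RnLoc.left 0)
  | initR : RnTrans n (RnLoc.init, (), RC.neg (RC.req 0), {0}, RnLoc.right 0)
  | loopL (i : Fin (n + 1)) :
      RnTrans n (RnLoc.left i, (), bigOrEq (regsUpTo n i), ∅, RnLoc.left i)
  | loopR (i : Fin (n + 1)) :
      RnTrans n (RnLoc.right i, (), bigOrEq (regsUpTo n i), ∅, RnLoc.right i)
  | stepL (i : Fin (n + 1)) (h : (i : ℕ) < n) :
      RnTrans n (RnLoc.left i, (), bigAndNeq (regsUpTo n i),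
        {⟨(i : ℕ) + 1, Nat.succ_lt_succ h⟩}, RnLoc.left ⟨(i : ℕ) + 1, Nat.succ_lt_succ h⟩)
  | stepR (i : Fin (n + 1)) (h : (i : ℕ) < n) :
      RnTrans n (RnLoc.right i, (), bigAndNeq (regsUpTo n i),
        {⟨(i : ℕ) + 1, Nat.succ_lt_succ h⟩}, RnLoc.right ⟨(i : ℕ) + 1, Nat.succ_lt_succ h⟩)
  | lastL : RnTrans n (RnLoc.left (Fin.last n), (), bigAndNeq (regsUpTo n (Fin.last n)),
      Set.univ, RnLoc.synch)
  | lastR : RnTrans n (RnLoc.right (Fin.last n), (), bigAndNeq (regsUpTo n (Fin.last n)),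
      Set.univ, RnLoc.synch)
  | synchLoop : RnTrans n (RnLoc.synch, (), RC.tt, Set.univ, RnLoc.synch)

/-- The transition relation of `R_{n+1}` as a set. -/
def RnT (n : ℕ) : Set (RATrans (RnLoc n) Unit (Fin (n + 1))) := {t | RnTrans n t}

theorem sat_bigOrEq_aux {R D : Type} (ν : R → D) (d : D) (r : R) (hr : ν r = d) :
    ∀ l : List R, r ∈ l → RC.sat ν d (bigOrEq l) := by
  intro l
  induction l with
  | nil => intro h; simp at h
  | cons x l ih =>
    intro h
    change ¬ (¬ (ν x = d) ∧ ¬ RC.sat ν d (bigOrEq l))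
    rintro ⟨h1, h2⟩
    rcases List.mem_cons.1 h with h | h
    · subst h; exact h1 hr
    · exact h2 (ih h)

theorem postWord_stuck_aux {D : Type} (m : ℕ) (ν : Fin (m + 1) → D) (ℓ : RnLoc m)
    (hℓ : RnTrans m (ℓ, (), bigOrEq (regsUpTo m (Fin.last m)), ∅, ℓ)) :
    ∀ (w : List (Unit × D)) (S : Set (Config (RnLoc m) (Fin (m + 1)) D)),
      dataSet w ⊆ Set.range ν → (ℓ, ν) ∈ S → (ℓ, ν) ∈ postWord (RnT m) S w := by
  intro w
  induction w with
  | nil => intro S _ h; exact h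
  | cons p w ih =>
    intro S hd h
    refine ih _ (fun d hd' => hd ?_) ?_
    · obtain ⟨q, hq, rfl⟩ := hd'
      exact ⟨q, List.mem_cons_of_mem _ hq, rfl⟩
    · obtain ⟨r, hr⟩ := hd ⟨p, List.mem_cons_self, rfl⟩
      refine ⟨(ℓ, ν), h, _, ∅, ℓ, hℓ, sat_bigOrEq_aux ν p.2 r hr _ ?_, ?_⟩
      · simp [regsUpTo, Fin.le_last]
      · refine Prod.ext rfl (funext fun x => ?_)
        simp [updVal]

/-- for every `n ≥ 1`, every synchronizing data word of the DRA `R_n`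
(here `R_{m+1} = RnT m`, so `n = m + 1` ranges over all `n ≥ 1`) has data efficiency at
least `n + 1`, i.e. at least `m + 2`. -/
theorem stmt6 {D : Type} [Infinite D] (m : ℕ)
    (w : List (Unit × D)) (hw : IsSync D (RnT m) w) :
    (m + 1) + 1 ≤ (dataSet w).ncard := by
  obtain ⟨hne, q, hq⟩ := hw
  by_contra hlt
  have hfin : (dataSet w).Finite := by
    have : dataSet w = (fun p : Unit × D => p.2) '' {p | p ∈ w} := by
      ext d; simp [dataSet]
    rw [this]
    exact (List.finite_toSet w).image _
  have hν : ∃ ν : Fin (m + 1) → D, dataSet w ⊆ Set.range ν := by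
    have hle : hfin.toFinset.card ≤ m + 1 := by
      rw [← Set.ncard_eq_toFinset_card _ hfin]; omega
    obtain ⟨t, hst, ht⟩ := Infinite.exists_superset_card_eq hfin.toFinset (m + 1) hle
    refine ⟨fun i => ((t.equivFinOfCardEq ht).symm i : D), fun d hd => ?_⟩
    exact ⟨t.equivFinOfCardEq ht ⟨d, hst (hfin.mem_toFinset.2 hd)⟩, by simp⟩
  obtain ⟨ν, hν⟩ := hν
  have h1 := postWord_stuck_aux m ν _ (RnTrans.loopL (Fin.last m)) w Set.univ hν trivial
  have h2 := postWord_stuck_aux m ν _ (RnTrans.loopR (Fin.last m)) w Set.univ hν trivial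
  rw [hq] at h1 h2
  have h3 := h1.trans h2.symm
  simp at h3
end

section
/- For every n ≥ 1 and pairwise distinct data values x_1, ..., x_{n+1} ∈ D, the data word w = (a, x_1)(a, x_2)⋯(a, x_{n+1}) is synchronizing for the deterministic register automaton R_n (defined in the context); more precisely, post(L × D^n, w) = {(synch, ν)} where ν assigns x_{n+1} to every register. In particular, R_n has a synchronizing data word of data efficiency exactly n + 1. -/
open scoped Classical

theorem sat_bigOr {R D : Type} (ν : R → D) (d : D) (l : List R) :
    RC.sat ν d (bigOrEq l) ↔ ∃ r ∈ l, ν r = d := by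
  induction l with
  | nil => simp [bigOrEq, RC.sat]
  | cons a l ih =>
    have : bigOrEq (a :: l) = RC.or (RC.req a) (bigOrEq l) := rfl
    rw [this]
    simp only [RC.or, RC.sat, ih, List.exists_mem_cons_iff]
    rw [← not_or, not_not]

theorem sat_bigAnd {R D : Type} (ν : R → D) (d : D) (l : List R) :
    RC.sat ν d (bigAndNeq l) ↔ ∀ r ∈ l, ν r ≠ d := by
  induction l with
  | nil => simp [bigAndNeq, RC.sat]
  | cons a l ih =>
    have : bigAndNeq (a :: l) = RC.conj (RC.neg (RC.req a)) (bigAndNeq l) := rfl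
    rw [this]
    simp only [RC.sat, ih, List.forall_mem_cons, ne_eq]

theorem mem_regs (n : ℕ) (i j : Fin (n + 1)) : j ∈ regsUpTo n i ↔ j ≤ i := by
  simp [regsUpTo]

theorem rn_complete (D : Type) (m : ℕ) : RAComplete D (RnT m) := by
  rintro ⟨l, ν⟩ ⟨⟨⟩, d⟩
  cases l with
  | init =>
    by_cases h : ν 0 = d
    · exact ⟨_, _, _, _, RnTrans.initL, h, rfl⟩
    · exact ⟨_, _, _, _, RnTrans.initR, h, rfl⟩
  | synch => exact ⟨_, _, _, _, RnTrans.synchLoop, trivial, rfl⟩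
  | left i =>
    by_cases h : ∃ r ∈ regsUpTo m i, ν r = d
    · exact ⟨_, _, _, _, RnTrans.loopL i, (sat_bigOr _ _ _).2 h, rfl⟩
    · push Not at h
      rcases lt_or_ge (i : ℕ) m with hi | hi
      · exact ⟨_, _, _, _, RnTrans.stepL i hi, (sat_bigAnd _ _ _).2 h, rfl⟩
      · obtain rfl : i = Fin.last m := by ext; simp; omega
        exact ⟨_, _, _, _, RnTrans.lastL, (sat_bigAnd _ _ _).2 h, rfl⟩
  | right i =>
    by_cases h : ∃ r ∈ regsUpTo m i, ν r = d
    · exact ⟨_, _, _, _, RnTrans.loopR i, (sat_bigOr _ _ _).2 h, rfl⟩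
    · push Not at h
      rcases lt_or_ge (i : ℕ) m with hi | hi
      · exact ⟨_, _, _, _, RnTrans.stepR i hi, (sat_bigAnd _ _ _).2 h, rfl⟩
      · obtain rfl : i = Fin.last m := by ext; simp; omega
        exact ⟨_, _, _, _, RnTrans.lastR, (sat_bigAnd _ _ _).2 h, rfl⟩

noncomputable def stale {D : Type} {m : ℕ} (ν : Fin (m + 1) → D) (i : Fin (m + 1))
    (ys : List D) : ℕ := (Finset.univ.filter (fun j => j ≤ i ∧ ν j ∈ ys)).card

def SInv {D : Type} {m : ℕ} (z : D) (ys : List D) (q : Config (RnLoc m) (Fin (m + 1)) D) : Prop :=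
  match q.1 with
  | RnLoc.init => ys.length = m + 2
  | RnLoc.synch => ys ≠ [] ∨ ∀ r, q.2 r = z
  | RnLoc.left i => stale q.2 i ys + (m + 1) ≤ ys.length + i
  | RnLoc.right i => stale q.2 i ys + (m + 1) ≤ ys.length + i

theorem stale_loop {D : Type} {m : ℕ} (ν : Fin (m + 1) → D) (i : Fin (m + 1)) (d : D)
    (ys : List D) (hd : d ∉ ys) (h : RC.sat ν d (bigOrEq (regsUpTo m i))) :
    stale (updVal ν ∅ d) i ys + 1 ≤ stale ν i (d :: ys) := by
  have e : updVal ν ∅ d = ν := by funext r; simp [updVal]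
  rw [e]
  obtain ⟨r, hr, hrd⟩ := (sat_bigOr _ _ _).1 h
  rw [mem_regs] at hr
  apply Finset.card_lt_card
  rw [Finset.ssubset_iff_of_subset]
  · exact ⟨r, by simp [hr, hrd], by simp [hrd, hd]⟩
  · intro j
    simp only [Finset.mem_filter, Finset.mem_univ, true_and, List.mem_cons]
    tauto

theorem stale_step {D : Type} {m : ℕ} (ν : Fin (m + 1) → D) (i : Fin (m + 1)) (hi : (i : ℕ) < m)
    (d : D) (ys : List D) (hd : d ∉ ys) :
    stale (updVal ν {⟨(i : ℕ) + 1, Nat.succ_lt_succ hi⟩} d) ⟨(i : ℕ) + 1, Nat.succ_lt_succ hi⟩ ys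
      ≤ stale ν i (d :: ys) := by
  apply Finset.card_le_card
  intro j
  simp only [Finset.mem_filter, Finset.mem_univ, true_and, List.mem_cons, updVal,
    Set.mem_singleton_iff]
  rintro ⟨h1, h2⟩
  split_ifs at h2 with h3
  · exact absurd h2 hd
  · refine ⟨?_, Or.inr h2⟩
    rw [Fin.ext_iff] at h3
    rw [Fin.le_def] at h1 ⊢
    simp only at h1 h3
    omega

theorem stale_init {D : Type} {m : ℕ} (ν : Fin (m + 1) → D) (d : D) (ys : List D) (hd : d ∉ ys) :
    stale (updVal ν {0} d) 0 ys = 0 := by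
  unfold stale
  rw [Finset.card_eq_zero, Finset.filter_eq_empty_iff]
  rintro j - ⟨h1, h2⟩
  obtain rfl : j = 0 := le_antisymm h1 (Fin.zero_le _)
  simp [updVal] at h2
  exact hd h2

theorem sinv_step {D : Type} {m : ℕ} (z d : D) (ys : List D) (hd : d ∉ ys)
    (hz : ys = [] → d = z) (q q' : Config (RnLoc m) (Fin (m + 1)) D)
    (hq : SInv z (d :: ys) q) (hs : Step (RnT m) q ((), d) q') : SInv z ys q' := by
  obtain ⟨l, ν⟩ := q
  obtain ⟨φ, up, l', ht, hsat, rfl⟩ := hs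
  have ht' : RnTrans m (l, (), φ, up, l') := ht
  have hsy : ys ≠ [] ∨ ∀ r : Fin (m + 1), updVal ν Set.univ d r = z := by
    by_cases h : ys = []
    · right; intro r; simp [updVal, hz h]
    · exact Or.inl h
  cases ht' with
  | initL =>
    simp only [SInv, List.length_cons, stale_init ν d ys hd] at hq ⊢
    simp; omega
  | initR =>
    simp only [SInv, List.length_cons, stale_init ν d ys hd] at hq ⊢
    simp; omega
  | loopL i =>
    have := stale_loop ν i d ys hd hsat
    simp only [SInv, List.length_cons] at hq ⊢
    omega
  | loopR i =>
    have := stale_loop ν i d ys hd hsat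
    simp only [SInv, List.length_cons] at hq ⊢
    omega
  | stepL i h =>
    have := stale_step ν i h d ys hd
    simp only [SInv, List.length_cons] at hq ⊢
    omega
  | stepR i h =>
    have := stale_step ν i h d ys hd
    simp only [SInv, List.length_cons] at hq ⊢
    omega
  | lastL => exact hsy
  | lastR => exact hsy
  | synchLoop => exact hsy

theorem post_main {D : Type} {m : ℕ} (z : D) (ys : List D) (hn : ys.Nodup)
    (hz : ∀ h : ys ≠ [], ys.getLast h = z) (S : Set (Config (RnLoc m) (Fin (m + 1)) D))
    (hne : S.Nonempty) (hS : ∀ q ∈ S, SInv z ys q) :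
    postWord (RnT m) S (ys.map (fun d => ((), d))) = {((RnLoc.synch : RnLoc m), fun _ => z)} := by
  induction ys generalizing S with
  | nil =>
    simp only [List.map_nil, postWord]
    rw [Set.eq_singleton_iff_nonempty_unique_mem]
    refine ⟨hne, ?_⟩
    rintro ⟨l, ν⟩ hq
    have := hS _ hq
    cases l with
    | init => simp [SInv] at this
    | synch =>
      simp [SInv] at this
      exact Prod.ext rfl (funext this)
    | left i => simp [SInv] at this; omega
    | right i => simp [SInv] at this; omega
  | cons d ys ih =>
    simp only [List.map_cons, postWord]
    rw [List.nodup_cons] at hn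
    apply ih hn.2
    · intro h
      rw [← hz (by simp), List.getLast_cons h]
    · obtain ⟨q, hq⟩ := hne
      obtain ⟨q', h'⟩ := rn_complete D m q ((), d)
      exact ⟨q', q, hq, h'⟩
    · rintro q' ⟨q, hq, h⟩
      refine sinv_step z d ys hn.1 ?_ q q' (hS q hq) h
      rintro rfl
      simpa using hz (by simp)

/-- for every `n ≥ 1` (here `n = m + 1`) and pairwise distinct data values
`x 0, …, x (n)` (that is, `n + 1 = m + 2` of them), the data word
`(a, x 0)(a, x 1)⋯(a, x (m+1))` is synchronizing for `R_{m+1}`, and more precisely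
`post(L × D^{m+1}, w) = {(synch, ν)}` where `ν` assigns `x (m+1)` to every register;
in particular its data efficiency is exactly `m + 2`. -/
theorem stmt7 {D : Type} [Infinite D] (m : ℕ)
    (x : Fin (m + 2) → D) (hx : Function.Injective x) :
    IsSync D (RnT m) ((List.finRange (m + 2)).map (fun i => ((), x i))) ∧
    postWord (RnT m) (Set.univ : Set (Config (RnLoc m) (Fin (m + 1)) D))
        ((List.finRange (m + 2)).map (fun i => ((), x i)))
      = {((RnLoc.synch : RnLoc m), fun _ : Fin (m + 1) => x (Fin.last (m + 1)))} ∧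
    (dataSet ((List.finRange (m + 2)).map (fun i => ((), x i)))).ncard = m + 2 := by
  have key : postWord (RnT m) (Set.univ : Set (Config (RnLoc m) (Fin (m + 1)) D))
        ((List.finRange (m + 2)).map (fun i => ((), x i)))
      = {((RnLoc.synch : RnLoc m), fun _ : Fin (m + 1) => x (Fin.last (m + 1)))} := by
    have := post_main (m := m) (x (Fin.last (m + 1))) ((List.finRange (m + 2)).map x)
      ((List.nodup_finRange _).map hx) ?_ Set.univ
      ⟨(RnLoc.synch, fun _ => x 0), trivial⟩ ?_
    · rw [List.map_map] at this
      exact this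
    · intro h
      rw [List.getLast_map]
      congr 1
      rw [List.getLast_eq_getElem]
      ext
      simp
    · rintro ⟨l, ν⟩ -
      have hb : ∀ (i : Fin (m + 1)) (ys : List D), stale ν i ys ≤ i + 1 := by
        intro i ys
        calc stale ν i ys ≤ (Finset.Iic i).card := by
              apply Finset.card_le_card
              intro j
              simp
              tauto
          _ = i + 1 := by simp
      cases l with
      | init => simp [SInv]
      | synch => left; simp
      | left i =>
        have := hb i ((List.finRange (m + 2)).map x)
        simp only [SInv, List.length_map, List.length_finRange]; omega
      | right i =>
        have := hb i ((List.finRange (m + 2)).map x)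
        simp only [SInv, List.length_map, List.length_finRange]; omega
  refine ⟨⟨by simp, _, key⟩, key, ?_⟩
  have : dataSet ((List.finRange (m + 2)).map (fun i => ((), x i))) = x '' Set.univ := by
    ext d
    simp [dataSet]
  rw [this, Set.ncard_image_of_injective _ hx, Set.ncard_univ]
  simp
end

section
/- For every n ≥ 1 there exists a complete nondeterministic register automaton with a single register, over an alphabet with n + 3 letters and with at most 2n + 5 locations, that admits a synchronizing data word and such that in every synchronizing data word w some datum d ∈ data(w) occurs at least 2^n times in w. -/
open scoped Classical

/-- Location successor relation for counter letters read with the register datum. -/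
def NN (n a l l' : ℕ) : Prop :=
  l' = n ∨ (a < l ∧ l' = l) ∨ (l = a ∧ l' < a) ∨ l < a

/-- The transition relation. -/
def TT (n : ℕ) : Set (RATrans (Fin (n + 1)) (Fin (n + 3)) Unit) :=
  {t | (n ≤ t.2.1.val ∧ t.2.2.1 = RC.tt ∧ t.2.2.2.1 = Set.univ) ∨
    (t.2.1.val < n ∧ t.2.2.2.1 = ∅ ∧
      ((t.2.2.1 = RC.req () ∧ NN n t.2.1.val t.1.val t.2.2.2.2.val) ∨
       (t.2.2.1 = RC.neg (RC.req ()) ∧ t.2.2.2.2 = t.1)))}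

theorem step_iff {D : Type} (n : ℕ) (q : Config (Fin (n + 1)) Unit D) (i : Fin (n + 3) × D)
    (q' : Config (Fin (n + 1)) Unit D) :
    Step (TT n) q i q' ↔ (n ≤ i.1.val ∧ q'.2 = fun _ => i.2) ∨
      (i.1.val < n ∧ q'.2 = q.2 ∧ ((q.2 () = i.2 ∧ NN n i.1.val q.1.val q'.1.val) ∨
        (q.2 () ≠ i.2 ∧ q'.1 = q.1))) := by
  obtain ⟨l', ν'⟩ := q'
  constructor
  · rintro ⟨φ, up, l, h, hs, he⟩
    rw [Prod.mk.injEq] at he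
    obtain ⟨rfl, rfl⟩ := he
    rcases h with ⟨h1, h2, h3⟩ | ⟨h1, h2, ⟨h3, h4⟩ | ⟨h3, h4⟩⟩
    · left
      simp only at h1 h2 h3
      subst h3
      exact ⟨h1, by funext r; simp [updVal]⟩
    · right
      simp only at h1 h2 h3 h4
      subst h2 h3
      exact ⟨h1, by funext r; simp [updVal], Or.inl ⟨hs, h4⟩⟩
    · right
      simp only at h1 h2 h3 h4
      subst h2 h3
      exact ⟨h1, by funext r; simp [updVal], Or.inr ⟨hs, h4⟩⟩
  · rintro (⟨h1, h2⟩ | ⟨h1, h2, ⟨h3, h4⟩ | ⟨h3, h4⟩⟩)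
    · refine ⟨RC.tt, Set.univ, l', Or.inl ⟨h1, rfl, rfl⟩, trivial, ?_⟩
      simp only at h2
      rw [h2]
      congr 1
      funext r; simp [updVal]
    · refine ⟨RC.req (), ∅, l', Or.inr ⟨h1, rfl, Or.inl ⟨rfl, h4⟩⟩, h3, ?_⟩
      simp only at h2
      rw [h2]
      congr 1
      funext r; simp [updVal]
    · refine ⟨RC.neg (RC.req ()), ∅, l', Or.inr ⟨h1, rfl, Or.inr ⟨rfl, h4⟩⟩, h3, ?_⟩
      simp only at h2
      rw [h2]
      congr 1
      funext r; simp [updVal]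

theorem complete_TT (D : Type) (n : ℕ) : RAComplete D (TT n) := by
  intro q i
  by_cases h : n ≤ i.1.val
  · exact ⟨(q.1, fun _ => i.2), (step_iff _ _ _ _).2 (Or.inl ⟨h, rfl⟩)⟩
  · by_cases h2 : q.2 () = i.2
    · exact ⟨(Fin.last n, q.2), (step_iff _ _ _ _).2
        (Or.inr ⟨by omega, rfl, Or.inl ⟨h2, Or.inl rfl⟩⟩)⟩
    · exact ⟨(q.1, q.2), (step_iff _ _ _ _).2 (Or.inr ⟨by omega, rfl, Or.inr ⟨h2, rfl⟩⟩)⟩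

/-- Configurations with constant register `d` and location in `X`. -/
def CS (n : ℕ) {D : Type} (d : D) (X : Set ℕ) : Set (Config (Fin (n + 1)) Unit D) :=
  {q | q.1.val ∈ X ∧ q.2 = fun _ => d}

theorem postWord_append {L A R D : Type} (T : Set (RATrans L A R)) (u v : List (A × D)) :
    ∀ S : Set (Config L R D), postWord T S (u ++ v) = postWord T (postWord T S u) v := by
  induction u with
  | nil => intro S; rfl
  | cons x u ih => intro S; exact ih _

theorem post_init {D : Type} (n : ℕ) (S : Set (Config (Fin (n + 1)) Unit D)) (hS : S.Nonempty)
    (i : Fin (n + 3) × D) (hi : n ≤ i.1.val) :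
    postStep (TT n) S i = CS n i.2 Set.univ := by
  ext q'
  simp only [postStep, CS, Set.mem_ofPred_eq, step_iff, Set.mem_univ, true_and]
  obtain ⟨q, hq⟩ := hS
  constructor
  · rintro ⟨p, -, h | h⟩
    · exact h.2
    · omega
  · intro h
    exact ⟨q, hq, Or.inl ⟨hi, h⟩⟩

theorem post_count {D : Type} (n a : ℕ) (ha : a < n) (d : D) (X : Set ℕ) :
    postStep (TT n) (CS n d X) (⟨a, by omega⟩, d) =
      CS n d {l' | ∃ l ∈ X, l ≤ n ∧ NN n a l l'} := by
  ext q'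
  simp only [postStep, CS, Set.mem_ofPred_eq, step_iff]
  constructor
  · rintro ⟨p, ⟨hp1, hp2⟩, h | ⟨h1, h2, h3⟩⟩
    · omega
    · refine ⟨⟨p.1.val, hp1, by omega, ?_⟩, by rw [h2, hp2]⟩
      rcases h3 with h3 | h3
      · exact h3.2
      · exact absurd (by rw [hp2]) h3.1
  · rintro ⟨⟨l, hl, hln, h⟩, h2⟩
    exact ⟨(⟨l, by omega⟩, fun _ => d), ⟨hl, rfl⟩, Or.inr ⟨ha, h2, Or.inl ⟨rfl, h⟩⟩⟩

theorem exists_word {D : Type} (n : ℕ) (d : D) (i : ℕ) : i ≤ n → 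
    ∃ w : List (Fin (n + 3) × D), ∀ U : Set ℕ, n ∈ U → (∀ u ∈ U, i ≤ u) →
      postWord (TT n) (CS n d (U ∪ {l | l < i})) w = CS n d U := by
  induction i with
  | zero => intro _; exact ⟨[], fun U _ _ => by simp [postWord]⟩
  | succ i ih =>
    intro hi
    obtain ⟨w, hw⟩ := ih (by omega)
    refine ⟨w ++ (⟨i, by omega⟩, d) :: w, fun U hn hU => ?_⟩
    rw [postWord_append]
    have e1 : U ∪ {l | l < i + 1} = (insert i U) ∪ {l | l < i} := by
      ext x
      simp only [Set.mem_union, Set.mem_ofPred_eq, Set.mem_insert_iff]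
      have : x < i + 1 ↔ x = i ∨ x < i := by omega
      tauto
    rw [e1, hw (insert i U) (Set.mem_insert_of_mem _ hn)
      (by
        intro u hu
        rcases hu with rfl | hu
        · exact le_rfl
        · have := hU u hu
          omega)]
    show postWord (TT n) (postStep _ _ _) w = _
    rw [post_count n i (by omega)]
    have e2 : CS n d {l' | ∃ l ∈ insert i U, l ≤ n ∧ NN n i l l'} = CS n d (U ∪ {l | l < i}) := by
      ext q
      simp only [CS, Set.mem_ofPred_eq, Set.mem_union, Set.mem_insert_iff]
      refine and_congr_left fun _ => ?_
      constructor
      · rintro ⟨l, hl, hln, h⟩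
        rcases h with h | h | h | h
        · rw [h]; exact Or.inl hn
        · rcases hl with hl | hl
          · omega
          · rw [h.2]; exact Or.inl hl
        · exact Or.inr h.2
        · rcases hl with hl | hl
          · omega
          · have := hU l hl
            omega
      · rintro (h | h)
        · exact ⟨q.1, Or.inr h, by omega, Or.inr (Or.inl ⟨hU _ h, rfl⟩)⟩
        · exact ⟨i, Or.inl rfl, by omega, Or.inr (Or.inr (Or.inl ⟨rfl, h⟩))⟩
    rw [e2]
    exact hw U hn fun u hu => by
      have := hU u hu
      omega

/-- The locations of `S` carrying `d`, below `n`. -/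
noncomputable def occ {D : Type} (n : ℕ) (d : D) (S : Set (Config (Fin (n + 1)) Unit D)) :
    Finset ℕ :=
  (Finset.range n).filter fun l => ∃ h : l < n + 1, ((⟨l, h⟩, fun _ => d) : Config _ _ _) ∈ S

/-- Binary value. -/
noncomputable def VV {D : Type} (n : ℕ) (d : D) (S : Set (Config (Fin (n + 1)) Unit D)) : ℕ :=
  ∑ l ∈ occ n d S, 2 ^ l

theorem sum_two (n : ℕ) : ∑ l ∈ Finset.range n, 2 ^ l = 2 ^ n - 1 := by
  have := Nat.geomSum_eq (le_refl 2) n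
  simpa using this

theorem mem_occ {D : Type} (n : ℕ) (d : D) (S : Set (Config (Fin (n + 1)) Unit D)) (l : ℕ) :
    l ∈ occ n d S ↔ l < n ∧ ∃ h : l < n + 1, ((⟨l, h⟩, fun _ => d) : Config _ _ _) ∈ S := by
  simp [occ]

theorem VV_step {D : Type} (n : ℕ) (d : D) (S : Set (Config (Fin (n + 1)) Unit D))
    (i : Fin (n + 3) × D) (hi : i.1.val < n) :
    VV n d S ≤ VV n d (postStep (TT n) S i) + (if i.2 = d then 1 else 0) := by
  by_cases hd : i.2 = d
  · rw [if_pos hd]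
    have key : ∀ l l', l ∈ occ n d S → NN n i.1.val l l' → l' < n →
        l' ∈ occ n d (postStep (TT n) S i) := by
      intro l l' hl hN hl'
      rw [mem_occ] at hl ⊢
      obtain ⟨_, h1, h2⟩ := hl
      exact ⟨hl', by omega, _, h2, (step_iff _ _ _ _).2 (Or.inr ⟨hi, rfl, Or.inl ⟨hd.symm, hN⟩⟩)⟩
    by_cases hv : ∃ l ∈ occ n d S, l < i.1.val
    · obtain ⟨l, hl, hli⟩ := hv
      refine le_trans ?_ (Nat.le_succ _)
      apply Finset.sum_le_sum_of_subset
      intro x hx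
      exact key l x hl (Or.inr (Or.inr (Or.inr hli))) ((mem_occ _ _ _ _).1 hx).1
    · push Not at hv
      by_cases hm : i.1.val ∈ occ n d S
      · have hdis : Disjoint ((occ n d S).erase i.1.val) (Finset.range i.1.val) := by
          rw [Finset.disjoint_left]
          intro x hx hx2
          have := hv x (Finset.mem_of_mem_erase hx)
          simp at hx2
          omega
        have hsub : (occ n d S).erase i.1.val ∪ Finset.range i.1.val ⊆
            occ n d (postStep (TT n) S i) := by
          intro x hx
          rw [Finset.mem_union, Finset.mem_erase, Finset.mem_range] at hx
          rcases hx with ⟨h1, h2⟩ | h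
          · have := hv x h2
            exact key x x h2 (Or.inr (Or.inl ⟨by omega, rfl⟩)) ((mem_occ _ _ _ _).1 h2).1
          · exact key _ x hm (Or.inr (Or.inr (Or.inl ⟨rfl, h⟩))) (by omega)
        have h1 : ∑ l ∈ (occ n d S).erase i.1.val ∪ Finset.range i.1.val, 2 ^ l ≤
            VV n d (postStep (TT n) S i) := Finset.sum_le_sum_of_subset hsub
        rw [Finset.sum_union hdis, sum_two] at h1
        have h2 := Finset.sum_erase_add (occ n d S) (fun l => 2 ^ l) hm
        have h3 : 0 < 2 ^ i.1.val := by positivity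
        unfold VV at h1 ⊢
        omega
      · refine le_trans ?_ (Nat.le_succ _)
        apply Finset.sum_le_sum_of_subset
        intro x hx
        have := hv x hx
        have hne : x ≠ i.1.val := by rintro rfl; exact hm hx
        exact key x x hx (Or.inr (Or.inl ⟨by omega, rfl⟩)) ((mem_occ _ _ _ _).1 hx).1
  · rw [if_neg hd, add_zero]
    apply Finset.sum_le_sum_of_subset
    intro x hx
    rw [mem_occ] at hx ⊢
    obtain ⟨h0, h1, h2⟩ := hx
    exact ⟨h0, h1, _, h2, (step_iff _ _ _ _).2 (Or.inr ⟨hi, rfl, Or.inr ⟨fun h => hd h.symm, rfl⟩⟩)⟩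

theorem VV_word {D : Type} [DecidableEq D] (n : ℕ) (d : D) (w : List (Fin (n + 3) × D)) :
    ∀ S : Set (Config (Fin (n + 1)) Unit D), (∀ p ∈ w, p.1.val < n) →
    VV n d S ≤ VV n d (postWord (TT n) S w) + (w.map Prod.snd).count d := by
  induction w with
  | nil => intro S _; simp [postWord]
  | cons x w ih =>
    intro S h
    have h1 := ih (postStep (TT n) S x) fun p hp => h p (List.mem_cons_of_mem _ hp)
    have h2 := VV_step n d S x (h x List.mem_cons_self)
    rw [List.map_cons, List.count_cons]
    show _ ≤ VV n d (postWord (TT n) (postStep (TT n) S x) w) + _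
    by_cases hx : x.2 = d
    · simp [hx] at h2 ⊢
      omega
    · simp [hx] at h2 ⊢
      omega

/-- The last location survives with register `d`. -/
theorem last_word {D : Type} (n : ℕ) (d : D) (w : List (Fin (n + 3) × D)) :
    ∀ S : Set (Config (Fin (n + 1)) Unit D), (∀ p ∈ w, p.1.val < n) →
    ((Fin.last n, fun _ => d) : Config _ _ _) ∈ S →
    ((Fin.last n, fun _ => d) : Config _ _ _) ∈ postWord (TT n) S w := by
  induction w with
  | nil => intro S _ h; exact h
  | cons x w ih =>
    intro S h hS
    refine ih _ (fun p hp => h p (List.mem_cons_of_mem _ hp)) ⟨_, hS, (step_iff _ _ _ _).2 ?_⟩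
    refine Or.inr ⟨h x List.mem_cons_self, rfl, ?_⟩
    by_cases hd : d = x.2
    · exact Or.inl ⟨hd, Or.inl rfl⟩
    · exact Or.inr ⟨hd, rfl⟩

theorem decomp {D : Type} (n : ℕ) (w : List (Fin (n + 3) × D)) :
    (∀ p ∈ w, p.1.val < n) ∨ ∃ u x v, w = u ++ x :: v ∧ n ≤ x.1.val ∧ ∀ p ∈ v, p.1.val < n := by
  induction w with
  | nil => left; simp
  | cons y w ih =>
    rcases ih with h | ⟨u, x, v, rfl, h⟩
    · by_cases hy : n ≤ y.1.val
      · exact Or.inr ⟨[], y, w, rfl, hy, h⟩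
      · left
        intro p hp
        rcases List.mem_cons.1 hp with rfl | hp
        · omega
        · exact h p hp
    · exact Or.inr ⟨y :: u, x, v, rfl, h⟩

theorem nonempty_word {D : Type} (n : ℕ) (w : List (Fin (n + 3) × D)) :
    ∀ S : Set (Config (Fin (n + 1)) Unit D), S.Nonempty → (postWord (TT n) S w).Nonempty := by
  induction w with
  | nil => intro S h; exact h
  | cons x w ih =>
    rintro S ⟨q, hq⟩
    obtain ⟨q', h⟩ := complete_TT D n q x
    exact ih _ ⟨q', q, hq, h⟩

/-- for every `n ≥ 1` there is a complete 1-NRA over an alphabet with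
`n + 3` letters and at most `2n + 5` locations that admits a synchronizing data word
and in every synchronizing data word some datum occurs at least `2^n` times. -/
theorem stmt10 {D : Type} [Infinite D] [DecidableEq D] (n : ℕ) (hn : 1 ≤ n) :
    ∃ m : ℕ, m ≤ 2 * n + 5 ∧
    ∃ T : Set (RATrans (Fin m) (Fin (n + 3)) Unit),
      RAComplete D T ∧
      (∃ w : List (Fin (n + 3) × D), IsSync D T w) ∧
      ∀ w : List (Fin (n + 3) × D), IsSync D T w →
        ∃ d ∈ dataSet w, 2 ^ n ≤ (w.map Prod.snd).count d := by
  obtain ⟨d1, d2, hd12⟩ := exists_pair_ne D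
  have hne : (Set.univ : Set (Config (Fin (n + 1)) Unit D)).Nonempty :=
    ⟨(0, fun _ => d1), trivial⟩
  refine ⟨n + 1, by omega, TT n, complete_TT D n, ?_, ?_⟩
  · obtain ⟨w, hw⟩ := exists_word n d1 n le_rfl
    refine ⟨(Fin.last _, d1) :: w, by simp, (Fin.last n, fun _ => d1), ?_⟩
    show postWord _ (postStep _ _ _) w = _
    rw [post_init n _ hne _ (by simp)]
    have := hw {n} rfl (by simp)
    have e : CS n d1 Set.univ = CS n d1 ({n} ∪ {l | l < n}) := by
      ext q
      simp only [CS, Set.mem_ofPred_eq, Set.mem_univ, Set.mem_union, Set.mem_singleton_iff]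
      have : q.1.val = n ∨ q.1.val < n := by omega
      tauto
    simp only
    rw [e, this]
    ext q
    obtain ⟨a, b⟩ := q
    simp [CS, Fin.ext_iff]
  · rintro w ⟨-, q, hq⟩
    rcases decomp n w with h | ⟨u, x, v, rfl, hx, hv⟩
    · have h1 := last_word n d1 w Set.univ h trivial
      have h2 := last_word n d2 w Set.univ h trivial
      rw [hq] at h1 h2
      have h3 := h1.trans h2.symm
      exact absurd (congrFun (congrArg Prod.snd h3) ()) hd12
    · refine ⟨x.2, ⟨x, by simp, rfl⟩, ?_⟩
      rw [postWord_append] at hq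
      change postWord (TT n) (postStep _ _ _) v = _ at hq
      rw [post_init n _ (nonempty_word n u _ hne) x hx] at hq
      have h1 := last_word n x.2 v (CS n x.2 Set.univ) hv ⟨trivial, rfl⟩
      have h2 := VV_word n x.2 v (CS n x.2 Set.univ) hv
      have h3 : VV n x.2 (CS n x.2 Set.univ) = 2 ^ n - 1 := by
        rw [← sum_two, VV]
        congr 1
        ext l
        rw [mem_occ, Finset.mem_range]
        exact ⟨fun h => h.1, fun h => ⟨h, by omega, trivial, rfl⟩⟩
      have h4 : VV n x.2 (postWord (TT n) (CS n x.2 Set.univ) v) = 0 := by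
        rw [VV, Finset.sum_eq_zero]
        intro l hl
        exfalso
        rw [mem_occ] at hl
        obtain ⟨h5, h6, h7⟩ := hl
        rw [hq] at h1 h7
        have := congrArg (fun q => q.1.val) (h1.trans h7.symm)
        simp at this
        omega
      have : 0 < 2 ^ n := by positivity
      simp only [List.map_append, List.map_cons, List.count_append, List.count_cons_self]
      omega
end

section
/- For every complete nondeterministic register automaton (L, {r}, Σ, T) with a single register over an infinite data domain D that admits a synchronizing data word, there exist a datum x ∈ D and a data word w with data(w) = {x} such that post(L × D, w) ⊆ L × {x}. -/
open scoped Classical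

theorem aux_sat {D : Type} (ν μ : Unit → D) (d e : D) (h : ν () = d ↔ μ () = e) (φ : RC Unit) :
    RC.sat ν d φ ↔ RC.sat μ e φ := by
  induction φ with
  | tt => simp [RC.sat]
  | req r => cases r; simpa [RC.sat] using h
  | conj a b iha ihb => simp only [RC.sat, iha, ihb]
  | neg a iha => simp only [RC.sat, iha]

theorem aux_post {L A D : Type} (T : Set (RATrans L A Unit)) (x y : D) (w : List (A × D)) :
    ∀ (S S' : Set (Config L Unit D)), (∀ p ∈ w, p.2 ≠ y) →
      (∀ q ∈ S, q.2 () = x ∨ (q.1, fun _ => y) ∈ S') →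
      ∀ q ∈ postWord T S (w.map fun p => (p.1, x)),
        q.2 () = x ∨ (q.1, fun _ => y) ∈ postWord T S' w := by
  induction w with
  | nil => intro S S' _ h q hq; exact h q hq
  | cons i w ih =>
    intro S S' hy h
    refine ih _ _ (fun p hp => hy p (List.mem_cons_of_mem _ hp)) ?_
    rintro q' ⟨q, hq, φ, up, l', hT, hs, rfl⟩
    by_cases hup : () ∈ up
    · left; simp [updVal, hup]
    by_cases hx : q.2 () = x
    · left; simp [updVal, hup, hx]
    right
    refine ⟨_, (h q hq).resolve_left hx, φ, up, l', hT, ?_, ?_⟩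
    · refine (aux_sat _ _ _ _ ?_ φ).1 hs
      have := hy i (by simp)
      exact ⟨fun e => absurd e hx, fun e => absurd e.symm this⟩
    · ext
      · rfl
      · simp [updVal, hup]

/-- every complete 1-NRA over an infinite data domain that admits a
synchronizing data word also admits a datum `x` and a data word `w` with
`data(w) = {x}` such that `post(L × D, w) ⊆ L × {x}`. -/
theorem stmt13 {L A D : Type} [Fintype L] [Fintype A] [Infinite D]
    (T : Set (RATrans L A Unit))
    (hcomp : RAComplete D T)
    (hsync : ∃ w : List (A × D), IsSync D T w) :
    ∃ (x : D) (w : List (A × D)), dataSet w = {x} ∧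
      postWord T (Set.univ : Set (Config L Unit D)) w ⊆
        {q : Config L Unit D | q.2 () = x} := by
  obtain ⟨w, hne, q0, hq0⟩ := hsync
  obtain ⟨x⟩ : Nonempty D := inferInstance
  obtain ⟨y, hy⟩ := Infinite.exists_notMem_finset (insert (q0.2 ()) (w.map Prod.snd).toFinset)
  simp only [Finset.mem_insert, List.mem_toFinset, not_or] at hy
  refine ⟨x, w.map fun p => (p.1, x), ?_, ?_⟩
  · ext d
    obtain ⟨i, w', rfl⟩ := List.exists_cons_of_ne_nil hne
    constructor
    · rintro ⟨p, hp, rfl⟩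
      obtain ⟨p', _, rfl⟩ := List.mem_map.1 hp
      rfl
    · rintro rfl
      exact ⟨(i.1, d), by simp, rfl⟩
  · intro q hq
    rcases aux_post T x y w Set.univ Set.univ
      (fun p hp e => hy.2 (List.mem_map.2 ⟨p, hp, e⟩)) (fun _ _ => Or.inr trivial) q hq with h | h
    · exact h
    · rw [hq0] at h
      have h' : (q.1, fun _ => y) = q0 := h
      exact absurd (by rw [← h']) hy.1
end

section
/- Let A be a complete nondeterministic register automaton with a single register r, locations L = {ℓ_1, ..., ℓ_n}, and alphabet Σ, over an infinite data domain D, and let lang be the data language over Σ_lang = Σ ∪ L ∪ {★} defined in the context. Then lang ≠ ∅ if and only if there exist a datum x ∈ D and a data word v ∈ (Σ × D)^+ such that post(L × {x}, v) is a singleton. -/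
open scoped Classical

/-- The alphabet `Σ_lang = Σ ∪ L ∪ {★}`: `Sum.inl a` is a letter of `Σ`,
`Sum.inr (Sum.inl ℓ)` is a location-letter, and `Sum.inr (Sum.inr ())` is `★`. -/
abbrev LangLetter (A L : Type) : Type := A ⊕ (L ⊕ Unit)

/-- Encoding of a single (normal) block: its list of location-data pairs followed by
its `Σ`-pair. -/
def encodeBlock {A L D : Type} (b : List (L × D) × (A × D)) : List (LangLetter A L × D) :=
  b.1.map (fun p => ((Sum.inr (Sum.inl p.1) : LangLetter A L), p.2))
    ++ [((Sum.inl b.2.1 : LangLetter A L), b.2.2)]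

/-- A data word of the shape `(★ L⁺ Σ)⁺ ★ ℓ ★` where every `★` carries the datum `y`:
the concatenation of the encoded blocks, each preceded by `(★, y)`, followed by the
final block `(★, y)(ℓ, x'')(★, y)`. -/
def encodeWord {A L D : Type} (y : D) (blocks : List (List (L × D) × (A × D)))
    (fin : L × D) : List (LangLetter A L × D) :=
  (blocks.map (fun b =>
      ((Sum.inr (Sum.inr ()) : LangLetter A L), y) :: encodeBlock b)).flatten
    ++ [((Sum.inr (Sum.inr ()) : LangLetter A L), y),
        ((Sum.inr (Sum.inl fin.1) : LangLetter A L), fin.2),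
        ((Sum.inr (Sum.inr ()) : LangLetter A L), y)]

/-- Condition (5) of the definition of `lang`, between a block `b` and the list `next`
of location-data pairs of the next block: whenever `(ℓ, x')` occurs in `b` and `(a, d)`
is the `Σ`-pair of `b`, then for every transition `(ℓ, a, φ, up, ℓ')` of the automaton
such that `(x', d)` satisfies `φ`, the pair `(ℓ', x'')` occurs in `next`, where
`x'' = d` if `up = {r}` and `x'' = x'` if `up = ∅`. -/
def SuccCond {L A D : Type} (T : Set (RATrans L A Unit)) (b : List (L × D) × (A × D))
    (next : List (L × D)) : Prop :=
  ∀ p ∈ b.1, ∀ (φ : RC Unit) (up : Set Unit) (ℓ' : L),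
    (p.1, b.2.1, φ, up, ℓ') ∈ T → RC.sat (fun _ : Unit => p.2) b.2.2 φ →
      ((() ∈ up → (ℓ', b.2.2) ∈ next) ∧ ((() ∉ up) → (ℓ', p.2) ∈ next))

/-- Membership in the data language `lang` associated with a complete 1-NRA with
transition relation `T` and location enumeration `locs = [ℓ_1, …, ℓ_n]`. -/
def LangMem {L A D : Type} (T : Set (RATrans L A Unit)) (locs : List L)
    (u : List (LangLetter A L × D)) : Prop :=
  ∃ (y x : D) (blocks : List (List (L × D) × (A × D))) (fin : L × D),
    u = encodeWord y blocks fin ∧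
    -- y ≠ x and the shape conditions (1)–(2)
    y ≠ x ∧
    blocks ≠ [] ∧
    (∀ b ∈ blocks, b.1 ≠ []) ∧
    (∀ b, blocks.head? = some b → b.1 = locs.map (fun ℓ => (ℓ, x))) ∧
    -- conditions (3)–(4): only `★` carries the datum `y`
    (∀ b ∈ blocks, (∀ p ∈ b.1, p.2 ≠ y) ∧ b.2.2 ≠ y) ∧
    fin.2 ≠ y ∧
    -- condition (5) between consecutive blocks and for the last block
    (∀ (i : ℕ) (h : i + 1 < blocks.length),
        SuccCond T (blocks.get ⟨i, Nat.lt_of_succ_lt h⟩) (blocks.get ⟨i + 1, h⟩).1) ∧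
    (∀ b, blocks.getLast? = some b → SuccCond T b [fin])

def cfg {L D : Type} (P : List (L × D)) : Set (Config L Unit D) :=
  {c | (c.1, c.2 ()) ∈ P}

theorem succCond_iff {L A D : Type} (T : Set (RATrans L A Unit)) (b : List (L × D) × (A × D))
    (next : List (L × D)) : SuccCond T b next ↔ postStep T (cfg b.1) b.2 ⊆ cfg next := by
  constructor
  · rintro h q' ⟨⟨l, ν⟩, hq, φ, up, l', hT, hs, rfl⟩
    have := h (l, ν ()) hq φ up l' hT hs
    by_cases hu : () ∈ up
    · simpa [cfg, updVal, hu] using this.1 hu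
    · simpa [cfg, updVal, hu] using this.2 hu
  · rintro h ⟨l, d⟩ hp φ up l' hT hs
    have h2 : ((l', updVal (fun _ => d) up b.2.2) : Config L Unit D) ∈ cfg next :=
      h ⟨(l, fun _ => d), hp, φ, up, l', hT, hs, rfl⟩
    constructor
    · intro hu
      simpa [cfg, updVal, hu] using h2
    · intro hu
      simpa [cfg, updVal, hu] using h2

theorem postStep_mono {L A D : Type} (T : Set (RATrans L A Unit)) {S S' : Set (Config L Unit D)}
    (h : S ⊆ S') (i : A × D) : postStep T S i ⊆ postStep T S' i := by
  rintro q ⟨p, hp, hs⟩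
  exact ⟨p, h hp, hs⟩

theorem postStep_nonempty {L A D : Type} (T : Set (RATrans L A Unit)) (hcomp : RAComplete D T)
    {S : Set (Config L Unit D)} (h : S.Nonempty) (i : A × D) : (postStep T S i).Nonempty := by
  obtain ⟨q, hq⟩ := h
  obtain ⟨q', hs⟩ := hcomp q i
  exact ⟨q', q, hq, hs⟩

theorem postWord_nonempty {L A D : Type} (T : Set (RATrans L A Unit)) (hcomp : RAComplete D T)
    (v : List (A × D)) : ∀ {S : Set (Config L Unit D)}, S.Nonempty → (postWord T S v).Nonempty := by
  induction v with
  | nil => intro S h; exact h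
  | cons i w ih => intro S h; exact ih (postStep_nonempty T hcomp h i)

theorem forward_aux {L A D : Type} (T : Set (RATrans L A Unit)) (fin : L × D)
    (bs : List (List (L × D) × (A × D))) : ∀ (b : List (L × D) × (A × D))
    (S : Set (Config L Unit D)), S ⊆ cfg b.1 →
    (∀ (i : ℕ) (h : i + 1 < (b :: bs).length),
        SuccCond T ((b :: bs).get ⟨i, Nat.lt_of_succ_lt h⟩) ((b :: bs).get ⟨i + 1, h⟩).1) →
    (∀ c, (b :: bs).getLast? = some c → SuccCond T c [fin]) →
    postWord T S ((b :: bs).map Prod.snd) ⊆ cfg [fin] := by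
  induction bs with
  | nil =>
    intro b S hS _ h2
    have := (succCond_iff T b [fin]).1 (h2 b (by simp))
    exact (postStep_mono T hS b.2).trans this
  | cons c bs ih =>
    intro b S hS h1 h2
    refine ih c (postStep T S b.2) ?_ ?_ ?_
    · exact (postStep_mono T hS b.2).trans ((succCond_iff T b c.1).1 (h1 0 (by simp)))
    · intro i h
      exact h1 (i + 1) (by simpa using h)
    · intro e he
      exact h2 e (by simpa [List.getLast?_cons_cons] using he)

theorem exists_list {L A D : Type} (T : Set (RATrans L A Unit)) (locs : List L)
    (hall : ∀ l : L, l ∈ locs) (P : List (L × D)) (i : A × D) :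
    ∃ P' : List (L × D), cfg P' = postStep T (cfg P) i ∧
      ∀ p ∈ P', p.2 = i.2 ∨ ∃ p' ∈ P, p.2 = p'.2 := by
  refine ⟨(locs ×ˢ (i.2 :: P.map Prod.snd)).filter
    (fun p => ((p.1, fun _ => p.2) : Config L Unit D) ∈ postStep T (cfg P) i), ?_, ?_⟩
  · ext ⟨l', ν⟩
    have hν : (fun _ => ν ()) = ν := rfl
    simp only [cfg, Set.mem_ofPred_eq, List.mem_filter, decide_eq_true_eq, hν]
    refine ⟨fun h => h.2, fun h => ⟨?_, h⟩⟩
    obtain ⟨⟨l, μ⟩, hq, φ, up, l'', hT, hs, he⟩ := h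
    refine List.pair_mem_product.2 ⟨hall _, ?_⟩
    have h2 : ν = updVal μ up i.2 := (Prod.mk.inj he).2
    subst h2
    by_cases hu : () ∈ up
    · simp [updVal, hu]
    · simp only [updVal, hu, if_false, List.mem_cons, List.mem_map]
      exact Or.inr ⟨_, hq, rfl⟩
  · rintro ⟨l, d⟩ hp
    have h := List.pair_mem_product.1 (List.mem_filter.1 hp).1
    rcases List.mem_cons.1 h.2 with h | h
    · exact Or.inl h
    · obtain ⟨p', hp', he⟩ := List.mem_map.1 h
      exact Or.inr ⟨p', hp', he.symm⟩

theorem backward_aux {L A D : Type} (T : Set (RATrans L A Unit)) (hcomp : RAComplete D T)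
    (locs : List L) (hall : ∀ l : L, l ∈ locs) (y : D) (q : Config L Unit D)
    (w : List (A × D)) : ∀ (i : A × D) (P : List (L × D)), P ≠ [] →
    (∀ p ∈ P, p.2 ≠ y) → (∀ j ∈ i :: w, j.2 ≠ y) → postWord T (cfg P) (i :: w) = {q} →
    ∃ bs : List (List (L × D) × (A × D)),
      (∀ b ∈ (P, i) :: bs, b.1 ≠ []) ∧
      (∀ b ∈ (P, i) :: bs, (∀ p ∈ b.1, p.2 ≠ y) ∧ b.2.2 ≠ y) ∧
      q.2 () ≠ y ∧
      (∀ (k : ℕ) (h : k + 1 < ((P, i) :: bs).length),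
        SuccCond T (((P, i) :: bs).get ⟨k, Nat.lt_of_succ_lt h⟩)
          (((P, i) :: bs).get ⟨k + 1, h⟩).1) ∧
      (∀ b, ((P, i) :: bs).getLast? = some b → SuccCond T b [(q.1, q.2 ())]) := by
  induction w with
  | nil =>
    intro i P hP hy hv hpost
    obtain ⟨P', hP', hd⟩ := exists_list T locs hall P i
    have hpost : postStep T (cfg P) i = {q} := hpost
    refine ⟨[], by simpa using hP, ?_, ?_, ?_, ?_⟩
    · intro b hb
      obtain rfl : b = (P, i) := by simpa using hb
      exact ⟨hy, hv i (by simp)⟩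
    · have hq : q ∈ cfg P' := by rw [hP', hpost]; rfl
      rcases hd _ hq with h | ⟨p', hp', h⟩
      · exact fun h' => hv i (by simp) (h.symm.trans h')
      · exact fun h' => hy p' hp' (h.symm.trans h')
    · intro k h
      simp at h
    · intro b hb
      obtain rfl : (P, i) = b := by simpa using hb
      rw [succCond_iff]
      show postStep T (cfg P) i ⊆ _
      rw [hpost]
      rintro _ rfl
      simp [cfg]
  | cons j w ih =>
    intro i P hP hy hv hpost
    obtain ⟨P', hP', hd⟩ := exists_list T locs hall P i
    have hne : (cfg P').Nonempty := by
      rw [hP']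
      apply postStep_nonempty T hcomp
      obtain ⟨p, hp⟩ := List.exists_mem_of_ne_nil P hP
      exact ⟨(p.1, fun _ => p.2), hp⟩
    have hpost' : postWord T (cfg P') (j :: w) = {q} := by rw [hP']; exact hpost
    obtain ⟨bs, h1, h2, h3, h4, h5⟩ := ih j P' (by
        rintro rfl
        obtain ⟨c, hc⟩ := hne
        simp [cfg] at hc) (by
        intro p hp
        rcases hd p hp with h | ⟨p', hp', h⟩
        · rw [h]; exact hv i (by simp)
        · rw [h]; exact hy p' hp') (fun k hk => hv k (List.mem_cons_of_mem _ hk)) hpost'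
    refine ⟨(P', j) :: bs, ?_, ?_, h3, ?_, ?_⟩
    · intro b hb
      rcases List.mem_cons.1 hb with rfl | hb
      · exact hP
      · exact h1 b hb
    · intro b hb
      rcases List.mem_cons.1 hb with rfl | hb
      · exact ⟨hy, hv i (by simp)⟩
      · exact h2 b hb
    · intro k h
      cases k with
      | zero => exact (succCond_iff T (P, i) P').2 hP'.ge
      | succ k => exact h4 k (by simpa using h)
    · intro b hb
      exact h5 b (by simpa [List.getLast?_cons_cons] using hb)

theorem cfg_locs {L D : Type} (locs : List L) (hall : ∀ l : L, l ∈ locs) (x : D) :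
    cfg (locs.map (fun l => (l, x))) = {p : Config L Unit D | p.2 = fun _ => x} := by
  ext ⟨l, ν⟩
  simp only [cfg, Set.mem_ofPred_eq, List.mem_map, Prod.mk.injEq]
  constructor
  · rintro ⟨_, _, _, h⟩
    funext u
    exact h.symm
  · intro h
    exact ⟨l, hall l, rfl, by rw [h]⟩

/-- for a complete 1-NRA with locations `ℓ_1, …, ℓ_n`, the language
`lang` is nonempty iff there are a datum `x` and a nonempty data word `v` such that
`post(L × {x}, v)` is a singleton. -/
theorem stmt14 {L A D : Type} [Fintype L] [Fintype A] [Infinite D]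
    (T : Set (RATrans L A Unit)) (hcomp : RAComplete D T)
    (locs : List L) (hnodup : locs.Nodup) (hall : ∀ ℓ : L, ℓ ∈ locs) :
    (∃ u : List (LangLetter A L × D), LangMem T locs u) ↔
    (∃ (x : D) (v : List (A × D)), v ≠ [] ∧
      ∃ q : Config L Unit D,
        postWord T {p : Config L Unit D | p.2 = fun _ => x} v = {q}) := by
  constructor
  · rintro ⟨u, y, x, blocks, fin, -, -, hne, hbne, hhead, -, -, h1, h2⟩
    cases blocks with
    | nil => exact absurd rfl hne
    | cons b bs =>
      have hb := hhead b rfl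
      have hcfg : cfg b.1 = {p : Config L Unit D | p.2 = fun _ => x} := by
        rw [hb, cfg_locs locs hall x]
      refine ⟨x, (b :: bs).map Prod.snd, by simp, (fin.1, fun _ => fin.2), ?_⟩
      rw [← hcfg]
      apply Set.Nonempty.subset_singleton_iff ?_ |>.1
      · intro c hc
        have h : (c.1, c.2 ()) ∈ [fin] := forward_aux T fin bs b _ subset_rfl h1 h2 hc
        have h : (c.1, c.2 ()) = fin := by simpa using h
        subst h
        rfl
      · apply postWord_nonempty T hcomp
        obtain ⟨p, hp⟩ := List.exists_mem_of_ne_nil b.1 (hbne b (by simp))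
        exact ⟨(p.1, fun _ => p.2), hp⟩
  · rintro ⟨x, v, hv, q, hq⟩
    cases v with
    | nil => exact absurd rfl hv
    | cons i w =>
      obtain ⟨y, hy⟩ := Infinite.exists_notMem_finset (x :: (i :: w).map Prod.snd).toFinset
      have hy : y ∉ (x :: (i :: w).map Prod.snd) := by simpa only [List.mem_toFinset] using hy
      have hyx : y ≠ x := fun h => hy (h ▸ List.mem_cons_self)
      have hyv : ∀ j ∈ i :: w, j.2 ≠ y := fun j hj h =>
        hy (List.mem_cons_of_mem _ (List.mem_map.2 ⟨j, hj, h⟩))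
      rw [← cfg_locs locs hall x] at hq
      obtain ⟨bs, g1, g2, g3, g4, g5⟩ := backward_aux T hcomp locs hall y q w i
        (locs.map (fun l => (l, x)))
        (fun h => List.ne_nil_of_mem (hall q.1) (List.map_eq_nil_iff.1 h))
        (by
          intro p hp
          obtain ⟨l, _, rfl⟩ := List.mem_map.1 hp
          exact hyx.symm) hyv hq
      refine ⟨_, y, x, (locs.map (fun l => (l, x)), i) :: bs, (q.1, q.2 ()), rfl, hyx, by simp,
        g1, ?_, g2, g3, g4, g5⟩
      intro b hb
      obtain rfl : (locs.map (fun l => (l, x)), i) = b := by simpa using hb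
      rfl
end
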